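/- arXiv:2107.03956 — 9 statements merged into one kernel-verified Lean document; each statement's English description precedes it below -/
import Mathlib

section
/- Let p be a prime with 61 < p and p ≠ 79, let n ≥ 1 be an integer, let M be a nonsingular n×n matrix over the field F_p, and let c_1,…,c_n, d_1,…,d_n ∈ F_p be arbitrary elements. Then there exists a vector x ∈ F_p^n such that x_i ≠ c_i for every 1 ≤ i ≤ n and (Mx)_i ≠ d_i for every 1 ≤ i ≤ n. -/
def smallTable : List (ℕ × List ℕ) := [
  (67, [0, 1, 16, 24, 32, 45, 64, 66]),
  (71, [0, 1, 2, 28, 32, 36, 43, 54]),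
  (73, [0, 1, 18, 31, 36, 44, 70, 72]),
  (83, [0, 1, 2, 4, 15, 29, 40, 43, 51]),
  (89, [0, 1, 2, 10, 14, 18, 23, 46, 79]),
  (97, [0, 1, 13, 40, 44, 48, 55, 79, 96]),
  (101, [0, 1, 2, 5, 32, 52, 59, 66, 67, 100]),
  (103, [0, 1, 6, 11, 19, 21, 38, 65, 80, 84]),
  (107, [0, 1, 3, 6, 14, 46, 57, 89, 105, 106]),
  (109, [0, 1, 2, 5, 10, 20, 41, 80, 97, 108]),
  (113, [0, 1, 39, 44, 72, 76, 78, 96, 105, 112]),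
  (127, [0, 1, 2, 4, 8, 20, 38, 63, 68, 105, 126]),
  (131, [0, 1, 21, 42, 57, 72, 76, 83, 87, 94, 130]),
  (137, [0, 1, 11, 21, 43, 60, 75, 79, 90, 120, 136]),
  (139, [0, 1, 25, 42, 50, 88, 95, 97, 99, 103, 126]),
  (149, [0, 1, 2, 7, 12, 16, 23, 44, 81, 137]),
  (151, [0, 1, 3, 7, 12, 24, 49, 82, 95, 141, 146, 150]),
  (157, [0, 1, 2, 7, 13, 27, 47, 92, 124, 144, 154, 156]),
  (163, [0, 1, 3, 8, 62, 77, 117, 124, 151, 157, 161, 162]),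
  (167, [0, 1, 3, 7, 14, 27, 55, 96, 159, 163, 165, 166]),
  (173, [0, 1, 4, 10, 22, 56, 87, 124, 149, 161, 169, 171]),
  (179, [0, 1, 2, 49, 98, 112, 114, 134, 147, 170, 175, 178]),
  (181, [0, 1, 22, 79, 81, 83, 87, 102, 142, 152, 157, 162]),
  (191, [0, 1, 2, 5, 11, 17, 35, 59, 70, 105, 113, 130, 190]),
  (193, [0, 1, 15, 17, 33, 51, 69, 105, 107, 116, 163, 178]),
  (197, [0, 1, 2, 4, 6, 12, 27, 102, 149, 175, 192, 194, 195, 196]),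
  (199, [0, 1, 30, 62, 85, 125, 130, 165, 171, 177, 197, 198]),
  (211, [0, 1, 49, 64, 68, 113, 128, 138, 151, 162, 164, 188, 196]),
  (223, [0, 1, 14, 33, 52, 116, 155, 189, 194, 199, 209, 211]),
  (227, [0, 1, 47, 59, 93, 95, 118, 134, 143, 173, 185]),
  (229, [0, 1, 3, 6, 11, 21, 104, 123, 167, 172, 202, 228]),
  (233, [0, 1, 7, 16, 24, 32, 64, 128, 181, 215, 217, 219]),
  (239, [0, 1, 78, 139, 155, 159, 161, 163, 167, 171, 175, 183, 200, 211]),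
  (241, [0, 1, 3, 7, 11, 19, 38, 73, 126, 139, 193, 236, 240]),
  (251, [0, 1, 2, 3, 10, 18, 34, 69, 87, 128, 174, 247, 250]),
  (257, [0, 1, 14, 60, 117, 136, 171, 205, 225, 233, 239, 241, 243, 245]),
  (263, [0, 1, 3, 5, 9, 22, 25, 45, 63, 81, 163, 174, 250, 256, 262]),
  (269, [0, 1, 2, 4, 9, 64, 129, 176, 223, 248, 258, 268]),
  (271, [0, 1, 7, 13, 37, 73, 133, 136, 200, 236, 260, 262, 264, 266]),
  (277, [0, 1, 3, 5, 10, 17, 37, 69, 145, 216, 246, 270, 274, 276]),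
  (281, [0, 1, 2, 5, 11, 23, 117, 128, 199, 238, 260, 271, 277, 280]),
  (283, [0, 1, 3, 11, 23, 71, 142, 218, 238, 258, 272, 278, 282]),
  (293, [0, 1, 2, 5, 9, 13, 128, 191, 210, 254, 273, 283, 289, 292]),
  (307, [0, 1, 3, 6, 15, 31, 71, 102, 145, 204, 257, 282, 290, 298, 304, 306]),
  (311, [0, 1, 2, 3, 7, 35, 70, 137, 188, 239, 276, 290, 304, 308, 310]),
  (313, [0, 1, 29, 47, 113, 121, 128, 179, 244, 246, 258, 272, 280, 286, 311, 312]),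
  (317, [0, 1, 3, 49, 97, 118, 136, 194, 226, 233, 266, 272, 291, 316]),
  (331, [0, 1, 2, 4, 12, 23, 50, 83, 104, 178, 207, 275, 303, 319, 327, 330]),
  (337, [0, 1, 2, 4, 50, 100, 126, 149, 231, 245, 285, 292, 297, 309, 336]),
  (347, [0, 1, 7, 14, 16, 32, 63, 77, 112, 147, 228, 267, 293, 306, 319, 333]),
  (349, [0, 1, 3, 5, 10, 21, 43, 87, 148, 174, 248, 296, 344, 348]),
  (353, [0, 1, 55, 96, 109, 159, 163, 167, 192, 222, 225, 252, 352]),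
  (359, [0, 1, 12, 103, 110, 116, 117, 180, 233, 244, 267, 321, 354, 356, 358])]

/-- Every element of `l` is a nontrivial midpoint modulo `p`. -/
def balCheck (p : ℕ) (l : List ℕ) : Bool :=
  l.all fun s => l.any fun x => l.any fun y =>
    decide (x % p ≠ s % p) && decide ((x + y) % p = (s + s) % p)

/-- The check done on the whole table. -/
def smallCheck (p : ℕ) : Bool :=
  decide (p ≤ 61) || decide (p = 79) || ((List.range 18).any fun d => decide (p % (d + 2) = 0)) ||
    smallTable.any fun q => decide (q.1 = p) && decide (q.2.length * q.2.length < p) &&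
      decide (0 ∈ q.2) && balCheck p q.2

lemma smallCheck_all : (List.range 362).all smallCheck = true := by
  decide +kernel

lemma mid_of_sum {p : ℕ} [Fact p.Prime] (S : Finset (ZMod p)) (s x y : ZMod p)
    (hx : x ∈ S) (hy : y ∈ S) (hxs : x ≠ s) (h : x + y = s + s) :
    ∃ k, k ≠ 0 ∧ s + k ∈ S ∧ s - k ∈ S := by
  refine ⟨x - s, sub_ne_zero.2 hxs, by simpa using hx, ?_⟩
  have : s - (x - s) = y := by linear_combination -h
  rwa [this]

lemma balanced_small {p : ℕ} [hp : Fact p.Prime] (h1 : 61 < p) (h2 : p ≠ 79) (h3 : p < 362) :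
    ∃ S : Finset (ZMod p), S.Nonempty ∧ S.card * S.card < p ∧
      ∀ s ∈ S, ∃ k, k ≠ 0 ∧ s + k ∈ S ∧ s - k ∈ S := by
  have h := List.all_eq_true.1 smallCheck_all p (List.mem_range.2 h3)
  simp only [smallCheck, Bool.or_eq_true, decide_eq_true_eq, List.any_eq_true, Bool.and_eq_true,
    List.mem_range] at h
  rcases h with ((h | h) | ⟨d, hd, h⟩) | ⟨q, -, ⟨⟨hq, hl⟩, h0⟩, hb⟩
  · omega
  · omega
  · have := (Nat.dvd_prime hp.out).1 (Nat.dvd_of_mod_eq_zero h)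
    omega
  · refine ⟨(q.2.map (fun m : ℕ => (m : ZMod p))).toFinset, ⟨0, ?_⟩, ?_, ?_⟩
    · simp only [List.mem_toFinset, List.mem_map]
      exact ⟨0, h0, by simp⟩
    · have := List.toFinset_card_le (q.2.map (fun m : ℕ => (m : ZMod p)))
      rw [List.length_map] at this
      exact lt_of_le_of_lt (Nat.mul_le_mul this this) hl
    · intro s hs
      simp only [List.mem_toFinset, List.mem_map] at hs
      obtain ⟨m, hm, rfl⟩ := hs
      simp only [balCheck, List.all_eq_true, List.any_eq_true, Bool.and_eq_true,
        decide_eq_true_eq] at hb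
      obtain ⟨x, hx, y, hy, hxm, hxy⟩ := hb m hm
      refine mid_of_sum _ _ (x : ZMod p) (y : ZMod p) ?_ ?_ ?_ ?_
      · simp only [List.mem_toFinset, List.mem_map]; exact ⟨x, hx, rfl⟩
      · simp only [List.mem_toFinset, List.mem_map]; exact ⟨y, hy, rfl⟩
      · intro h
        exact hxm ((ZMod.natCast_eq_natCast_iff' _ _ _).1 h)
      · have := (ZMod.natCast_eq_natCast_iff' _ _ _).2 hxy
        exact_mod_cast this

/-- `⌈p / 2 ^ j⌉`, defined recursively. -/
def halves (p : ℕ) : ℕ → ℕ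
  | 0 => p
  | j + 1 => (halves p j + 1) / 2

lemma halves_bound (p : ℕ) (K : ℕ) : ∀ j ≤ K, p ≤ 2 ^ K → halves p j ≤ 2 ^ (K - j) := by
  intro j
  induction j with
  | zero => intro _ h; simpa [halves] using h
  | succ j ih =>
    intro h1 h2
    have := ih (by omega) h2
    have e : 2 ^ (K - j) = 2 * 2 ^ (K - (j + 1)) := by
      rw [← pow_succ']; congr 1; omega
    simp only [halves]
    omega

lemma halves_pos (p : ℕ) (hp : 0 < p) (j : ℕ) : 0 < halves p j := by
  induction j with
  | zero => simpa [halves]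
  | succ j ih => simp only [halves]; omega

lemma halves_lower (p : ℕ) (j : ℕ) : p ≤ halves p j * 2 ^ j := by
  induction j with
  | zero => simp [halves]
  | succ j ih =>
    have h : halves p j ≤ halves p (j + 1) * 2 := by rw [halves]; omega
    calc p ≤ halves p j * 2 ^ j := ih
      _ ≤ (halves p (j + 1) * 2) * 2 ^ j := Nat.mul_le_mul_right _ h
      _ = _ := by ring

lemma halves_lt (p : ℕ) (hp : 1 < p) (j : ℕ) : halves p (j + 1) < p := by
  induction j with
  | zero => simp only [halves]; omega
  | succ j ih =>
    have := halves_pos p (by omega) (j + 1)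
    rw [halves]; omega

lemma balanced_large {p : ℕ} [hp : Fact p.Prime] (K : ℕ) (hK : p ≤ 2 ^ K) (hK' : 2 ^ (K - 1) < p)
    (hsize : (2 * K + 1) * (2 * K + 1) < p) :
    ∃ S : Finset (ZMod p), S.Nonempty ∧ S.card * S.card < p ∧
      ∀ s ∈ S, ∃ k, k ≠ 0 ∧ s + k ∈ S ∧ s - k ∈ S := by
  classical
  have hp2 := hp.out.two_le
  have hK0 : K ≠ 0 := by rintro rfl; simp at hK; omega
  let A : Finset (ZMod p) := (Finset.range K).image (fun j => (halves p (j + 1) : ZMod p))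
  let B : Finset (ZMod p) := (Finset.range K).image (fun j => -(halves p (j + 1) : ZMod p))
  let S : Finset (ZMod p) := insert 0 (A ∪ B)
  have h0 : (0 : ZMod p) ∈ S := Finset.mem_insert_self _ _
  have hone : halves p K = 1 := by
    have h1 := halves_bound p K K le_rfl hK
    have h2 := halves_pos p (by omega) K
    simp at h1
    omega
  have hmem : ∀ j ≤ K, (halves p j : ZMod p) ∈ S ∧ -(halves p j : ZMod p) ∈ S := by
    intro j hj
    rcases j with _ | j
    · simp [halves, h0]
    · constructor
      · refine Finset.mem_insert_of_mem (Finset.mem_union_left _ ?_)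
        exact Finset.mem_image.2 ⟨j, Finset.mem_range.2 hj, rfl⟩
      · refine Finset.mem_insert_of_mem (Finset.mem_union_right _ ?_)
        exact Finset.mem_image.2 ⟨j, Finset.mem_range.2 hj, rfl⟩
  have h1 : (1 : ZMod p) ∈ S ∧ (-1 : ZMod p) ∈ S := by
    have := hmem K le_rfl
    rw [hone] at this
    simpa using this
  have hne : ∀ j < K, (halves p j : ZMod p) ≠ halves p (j + 1) := by
    intro j hj h
    have := (ZMod.natCast_eq_natCast_iff' _ _ _).1 h
    rw [Nat.mod_eq_of_lt (halves_lt p (by omega) j)] at this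
    have hpos := halves_pos p (by omega) (j + 1)
    rcases j with _ | j
    · rw [halves, Nat.mod_self] at this
      omega
    · rw [Nat.mod_eq_of_lt (halves_lt p (by omega) j), halves.eq_2 p (j + 1)] at this
      have hpos' := halves_pos p (by omega) (j + 1)
      have h1 : halves p (j + 1) = 1 := by omega
      have h2 := halves_lower p (j + 1)
      have h3 : 2 ^ (j + 1) ≤ 2 ^ (K - 1) := Nat.pow_le_pow_right (by norm_num) (by omega)
      rw [h1] at h2
      omega
  have hmid : ∀ j < K, ∃ x ∈ S, ∃ y ∈ S, -x ∈ S ∧ -y ∈ S ∧ x ≠ halves p (j + 1) ∧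
      x + y = (halves p (j + 1) : ZMod p) + halves p (j + 1) := by
    intro j hj
    obtain ⟨m1, m2⟩ := hmem j hj.le
    rcases Nat.even_or_odd (halves p j) with he | he
    · refine ⟨halves p j, m1, 0, h0, m2, by simpa using h0, hne j hj, ?_⟩
      have : halves p j + 0 = halves p (j + 1) + halves p (j + 1) := by
        obtain ⟨r, hr⟩ := he
        rw [halves]; omega
      exact_mod_cast congrArg (Nat.cast (R := ZMod p)) this
    · refine ⟨halves p j, m1, 1, h1.1, m2, h1.2, hne j hj, ?_⟩
      have : halves p j + 1 = halves p (j + 1) + halves p (j + 1) := by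
        obtain ⟨r, hr⟩ := he
        rw [halves]; omega
      exact_mod_cast congrArg (Nat.cast (R := ZMod p)) this
  refine ⟨S, ⟨0, h0⟩, ?_, ?_⟩
  · have hc : S.card ≤ 2 * K + 1 := by
      have hA : A.card ≤ K := Finset.card_image_le.trans (by simp)
      have hB : B.card ≤ K := Finset.card_image_le.trans (by simp)
      have := Finset.card_insert_le (0 : ZMod p) (A ∪ B)
      have := Finset.card_union_le A B
      show (insert 0 (A ∪ B)).card ≤ _
      omega
    exact lt_of_le_of_lt (Nat.mul_le_mul hc hc) hsize
  · intro s hs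
    rcases Finset.mem_insert.1 hs with rfl | hs
    · exact ⟨1, one_ne_zero, by simpa using h1.1, by simpa using h1.2⟩
    rcases Finset.mem_union.1 hs with hs | hs
    · obtain ⟨j, hj, rfl⟩ := Finset.mem_image.1 hs
      obtain ⟨x, hx, y, hy, -, -, h3, h4⟩ := hmid j (Finset.mem_range.1 hj)
      exact mid_of_sum _ _ x y hx hy h3 h4
    · obtain ⟨j, hj, rfl⟩ := Finset.mem_image.1 hs
      obtain ⟨x, -, y, -, hx, hy, h3, h4⟩ := hmid j (Finset.mem_range.1 hj)
      refine mid_of_sum _ _ (-x) (-y) hx hy (fun h => h3 (neg_injective h)) ?_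
      linear_combination -h4

lemma pow_bound (K : ℕ) : (2 * (K + 10) + 1) * (2 * (K + 10) + 1) < 2 ^ (K + 9) := by
  induction K with
  | zero => norm_num
  | succ K ih =>
    have : 2 ^ (K + 1 + 9) = 2 * 2 ^ (K + 9) := by rw [← pow_succ']
    rw [this]
    nlinarith

lemma balanced_exists {p : ℕ} [hp : Fact p.Prime] (h1 : 61 < p) (h2 : p ≠ 79) :
    ∃ S : Finset (ZMod p), S.Nonempty ∧ S.card * S.card < p ∧
      ∀ s ∈ S, ∃ k, k ≠ 0 ∧ s + k ∈ S ∧ s - k ∈ S := by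
  by_cases h3 : p < 362
  · exact balanced_small h1 h2 h3
  push Not at h3
  by_cases h4 : p ≤ 512
  · exact balanced_large 9 (by norm_num; omega) (by norm_num; omega) (by norm_num; omega)
  push Not at h4
  have h5 : p ≤ 2 ^ Nat.clog 2 p := Nat.le_pow_clog (by norm_num) p
  have h6 : 10 ≤ Nat.clog 2 p := by
    by_contra! h
    have : 2 ^ Nat.clog 2 p ≤ 2 ^ 9 := Nat.pow_le_pow_right (by norm_num) (by omega)
    omega
  have h7 := Nat.pow_pred_clog_lt_self (b := 2) (x := p) (by norm_num) (by omega)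
  refine balanced_large _ h5 h7 ?_
  obtain ⟨K, hK⟩ := Nat.exists_eq_add_of_le' h6
  rw [hK] at h7 ⊢
  exact (pow_bound K).trans h7

open Finset in
lemma char_sum_zero {p : ℕ} [Fact p.Prime] {n : ℕ} (u : Fin n → ZMod p) (hu : u ≠ 0) :
    ∑ x : Fin n → ZMod p, (ZMod.stdAddChar (u ⬝ᵥ x) : ℂ) = 0 := by
  let φ : AddChar (Fin n → ZMod p) ℂ :=
    { toFun := fun x => ZMod.stdAddChar (u ⬝ᵥ x)
      map_zero_eq_one' := by simp
      map_add_eq_mul' := by intro x y; rw [dotProduct_add, AddChar.map_add_eq_mul] }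
  have h : φ ≠ 1 := by
    obtain ⟨i, hi⟩ := Function.ne_iff.mp hu
    intro h
    have h1 : φ (Pi.single i 1) = 1 := by rw [h]; rfl
    have h2 : (ZMod.stdAddChar (u ⬝ᵥ (Pi.single i 1)) : ℂ) = 1 := h1
    rw [dotProduct_single_one] at h2
    have h3 : (ZMod.stdAddChar (u i) : ℂ) = ZMod.stdAddChar (0 : ZMod p) := by
      rw [h2, AddChar.map_zero_eq_one]
    exact hi (ZMod.injective_stdAddChar h3)
  exact AddChar.sum_eq_zero_of_ne_one h

open Finset in
lemma line_claim {p : ℕ} [Fact p.Prime] {n : ℕ} {ι : Type*} [DecidableEq ι] (Y : Finset ι)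
    (a : ι → Fin n → ZMod p) (c k : ι → ZMod p) (hk : ∀ f ∈ Y, k f ≠ 0)
    (b : Fin n → ZMod p) (cb : ZMod p)
    (hcov : ∀ x, (∀ f ∈ Y, a f ⬝ᵥ x ≠ c f) → b ⬝ᵥ x = cb)
    (hnot : ∃ x, ∀ f ∈ Y, a f ⬝ᵥ x ≠ c f) :
    ∃ S₀ ⊆ Y, ∀ t : ZMod p, ∃ S ⊆ Y, ∑ f ∈ S, k f • a f = ∑ f ∈ S₀, k f • a f + t • b := by
  let ψ : AddChar (ZMod p) ℂ := ZMod.stdAddChar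
  have hprod : ∀ (S : Finset ι) (g : ι → ZMod p), ψ (∑ f ∈ S, g f) = ∏ f ∈ S, ψ (g f) := by
    intro S g
    induction S using Finset.induction_on with
    | empty => simp
    | insert x S hx ih => rw [sum_insert hx, prod_insert hx, AddChar.map_add_eq_mul, ih]
  let F : (Fin n → ZMod p) → ℂ := fun x => ∏ f ∈ Y, (ψ (k f * (a f ⬝ᵥ x)) + -ψ (k f * c f))
  have hF : ∀ x, F x ≠ 0 ↔ ∀ f ∈ Y, a f ⬝ᵥ x ≠ c f := by
    intro x
    simp only [F, Finset.prod_ne_zero_iff]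
    refine forall₂_congr fun f hf => ?_
    rw [← sub_eq_add_neg, sub_ne_zero, not_iff_not]
    constructor
    · intro h
      exact mul_left_cancel₀ (hk f hf) (ZMod.injective_stdAddChar h)
    · intro h; rw [h]
  let Fh : (Fin n → ZMod p) → ℂ := fun w => ∑ x, F x * ψ (-(w ⬝ᵥ x))
  have hshift : ∀ w t, Fh (w + t • b) = ψ (-(t * cb)) * Fh w := by
    intro w t
    simp only [Fh]
    rw [Finset.mul_sum]
    refine Finset.sum_congr rfl fun x _ => ?_
    by_cases hx : F x = 0
    · simp [hx]
    · have := hcov x ((hF x).1 hx)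
      rw [add_dotProduct, smul_dotProduct, this, neg_add, AddChar.map_add_eq_mul, smul_eq_mul]
      ring
  have hsupp : ∀ w, Fh w ≠ 0 → ∃ S ⊆ Y, ∑ f ∈ S, k f • a f = w := by
    intro w
    contrapose!
    intro h
    simp only [Fh, F]
    simp_rw [Finset.prod_add, Finset.sum_mul]
    rw [Finset.sum_comm]
    refine Finset.sum_eq_zero fun S hS => ?_
    have hS' := Finset.mem_powerset.1 hS
    have key : ∀ x : Fin n → ZMod p,
        (∏ f ∈ S, ψ (k f * (a f ⬝ᵥ x))) * (∏ f ∈ Y \ S, -ψ (k f * c f)) * ψ (-(w ⬝ᵥ x))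
        = (∏ f ∈ Y \ S, -ψ (k f * c f)) * ψ ((∑ f ∈ S, k f • a f - w) ⬝ᵥ x) := by
      intro x
      rw [sub_dotProduct, sum_dotProduct, sub_eq_add_neg, AddChar.map_add_eq_mul,
        hprod]
      simp only [smul_dotProduct, smul_eq_mul]
      ring
    simp_rw [key]
    rw [← Finset.mul_sum, char_sum_zero _ (sub_ne_zero.2 (h S hS')), mul_zero]
  have hne : ∃ w, Fh w ≠ 0 := by
    by_contra! h0
    obtain ⟨x₀, hx₀⟩ := hnot
    have hx₀ := (hF x₀).2 hx₀
    have h1 : ∑ w, Fh w * ψ (w ⬝ᵥ x₀) = 0 := by simp [h0]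
    simp only [Fh, Finset.sum_mul] at h1
    rw [Finset.sum_comm] at h1
    have key : ∀ x w : Fin n → ZMod p, F x * ψ (-(w ⬝ᵥ x)) * ψ (w ⬝ᵥ x₀)
        = F x * ψ ((x₀ - x) ⬝ᵥ w) := by
      intro x w
      rw [mul_assoc, ← AddChar.map_add_eq_mul, sub_dotProduct, dotProduct_comm x₀,
        dotProduct_comm x, neg_add_eq_sub]
    simp_rw [key, ← Finset.mul_sum] at h1
    rw [Finset.sum_eq_single x₀] at h1
    · simp [(Fact.out : p.Prime).ne_zero] at h1
      exact hx₀ h1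
    · intro x _ hx
      rw [char_sum_zero _ (sub_ne_zero.2 hx.symm), mul_zero]
    · simp
  obtain ⟨w, hw⟩ := hne
  obtain ⟨S₀, hS₀, rfl⟩ := hsupp w hw
  refine ⟨S₀, hS₀, fun t => ?_⟩
  apply hsupp
  rw [hshift]
  refine mul_ne_zero ?_ hw
  intro h
  have := AddChar.map_add_eq_mul ψ (-(t * cb)) (t * cb)
  rw [h] at this
  simp at this

open Finset in
lemma repr_lemma {p : ℕ} [Fact p.Prime] {n : ℕ} {ι : Type*} [DecidableEq ι] (X : Finset ι)
    (a : ι → Fin n → ZMod p) (c : ι → ZMod p)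
    (hcov : ∀ x, ∃ e ∈ X, a e ⬝ᵥ x = c e)
    (hmin : ∀ e ∈ X, ∃ x, ∀ f ∈ X.erase e, a f ⬝ᵥ x ≠ c f)
    (S : Finset (ZMod p)) (hne : S.Nonempty)
    (hS : ∀ s ∈ S, ∃ k, k ≠ 0 ∧ s + k ∈ S ∧ s - k ∈ S) :
    ∀ (N : ℕ) (s : ι → ZMod p), (X.filter (fun e => s e ∉ S)).card = N →
      ∃ s' : ι → ZMod p, (∀ e ∈ X, s' e ∈ S) ∧ ∑ e ∈ X, s' e • a e = ∑ e ∈ X, s e • a e := by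
  intro N
  induction N using Nat.strong_induction_on with
  | _ N ih =>
  intro s hs
  by_cases hbad : ∀ e ∈ X, s e ∈ S
  · exact ⟨s, hbad, rfl⟩
  push Not at hbad
  obtain ⟨e, he, hes⟩ := hbad
  have hk : ∀ f, ∃ k : ZMod p, k ≠ 0 ∧ (s f ∈ S → s f + k ∈ S ∧ s f - k ∈ S) := by
    intro f
    by_cases hf : s f ∈ S
    · obtain ⟨k, h1, h2⟩ := hS _ hf
      exact ⟨k, h1, fun _ => h2⟩
    · exact ⟨1, one_ne_zero, fun h => absurd h hf⟩
  choose k hk0 hk1 using hk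
  obtain ⟨S₀, hS₀, hl⟩ := line_claim (X.erase e) a c k (fun f _ => hk0 f) (a e) (c e)
    (by
      intro x hx
      obtain ⟨f, hf, hfx⟩ := hcov x
      by_cases hfe : f = e
      · exact hfe ▸ hfx
      · exact absurd hfx (hx f (mem_erase.2 ⟨hfe, hf⟩))) (hmin e he)
  obtain ⟨s₁, hs₁⟩ := hne
  obtain ⟨T, hT, hTe⟩ := hl (s e - s₁)
  let s' : ι → ZMod p := fun f => if f = e then s₁ else
    s f + ((if f ∈ T then k f else 0) - (if f ∈ S₀ then k f else 0))
  have hsum : ∑ f ∈ X, s' f • a f = ∑ f ∈ X, s f • a f := by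
    rw [← Finset.add_sum_erase _ _ he, ← Finset.add_sum_erase _ (fun f => s f • a f) he]
    have h1 : ∀ f ∈ X.erase e, s' f • a f = s f • a f +
        ((if f ∈ T then k f • a f else 0) - (if f ∈ S₀ then k f • a f else 0)) := by
      intro f hf
      simp only [s', if_neg (mem_erase.1 hf).1]
      split_ifs <;> simp [add_smul, sub_smul]
    rw [Finset.sum_congr rfl h1, Finset.sum_add_distrib, Finset.sum_sub_distrib,
      Finset.sum_ite_mem, Finset.sum_ite_mem, Finset.inter_eq_right.2 hT,
      Finset.inter_eq_right.2 hS₀, hTe]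
    simp only [s', if_true, sub_smul]
    abel
  have hlt : (X.filter (fun f => s' f ∉ S)).card < N := by
    rw [← hs]
    apply Finset.card_lt_card
    rw [Finset.ssubset_iff_of_subset]
    · exact ⟨e, by simp [he, hes], by simp [s', hs₁]⟩
    · intro f hf
      rw [mem_filter] at hf ⊢
      refine ⟨hf.1, fun hfS => hf.2 ?_⟩
      obtain ⟨h1, h2⟩ := hk1 f hfS
      simp only [s']
      split_ifs <;> simp_all [sub_eq_add_neg]
  obtain ⟨s'', h1, h2⟩ := ih _ hlt s' rfl
  exact ⟨s'', h1, h2.trans hsum⟩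

open Finset in
lemma card_bound {p : ℕ} [Fact p.Prime] {n : ℕ} {ι : Type*} [DecidableEq ι] (X : Finset ι)
    (a : ι → Fin n → ZMod p) (S : Finset (ZMod p))
    (h : ∀ s : ι → ZMod p, 
      ∃ s' : ι → ZMod p, (∀ e ∈ X, s' e ∈ S) ∧ ∑ e ∈ X, s' e • a e = ∑ e ∈ X, s e • a e) :
    p ^ Module.finrank (ZMod p) (Submodule.span (ZMod p) (a '' X)) ≤ S.card ^ X.card := by
  let W := Submodule.span (ZMod p) (a '' X)
  have h1 : Nat.card W = p ^ Module.finrank (ZMod p) W := by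
    rw [Module.natCard_eq_pow_finrank (K := ZMod p), Nat.card_zmod]
  have h2 : Nat.card (X → S) = S.card ^ X.card := by simp
  rw [← h1, ← h2]
  let g : (X → S) → W := fun s => ⟨∑ e : X, (s e : ZMod p) • a e, 
    Submodule.sum_mem _ fun e _ => Submodule.smul_mem _ _ 
      (Submodule.subset_span ⟨e, e.2, rfl⟩)⟩
  apply Nat.card_le_card_of_surjective g
  rintro ⟨w, hw⟩
  obtain ⟨s, hs⟩ : ∃ s : ι → ZMod p, ∑ e ∈ X, s e • a e = w := by
    obtain ⟨s, hs⟩ := (Submodule.mem_span_image_finset_iff_exists_fun (ZMod p)).1 hw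
    refine ⟨fun e => if h : e ∈ X then s ⟨e, h⟩ else 0, ?_⟩
    rw [← hs, ← Finset.sum_coe_sort X]
    exact Finset.sum_congr rfl fun e _ => by simp
  obtain ⟨s', h3, h4⟩ := h s
  refine ⟨fun e => ⟨s' e, h3 e e.2⟩, Subtype.ext ?_⟩
  simp only [g]
  rw [← hs, ← h4, ← Finset.sum_coe_sort X]

open Finset in
lemma exists_min_cover {ι V : Type*} [DecidableEq ι] (H : ι → V → Prop) (Y : Finset ι)
    (hY : ∀ x, ∃ e ∈ Y, H e x) :
    ∃ X : Finset ι, (∀ x, ∃ e ∈ X, H e x) ∧ ∀ e ∈ X, ∃ x, ∀ f ∈ X.erase e, ¬ H f x := by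
  induction Y using Finset.strongInduction with
  | _ Y ih =>
  by_cases h : ∀ e ∈ Y, ∃ x, ∀ f ∈ Y.erase e, ¬ H f x
  · exact ⟨Y, hY, h⟩
  · push Not at h
    obtain ⟨e, he, h⟩ := h
    exact ih _ (Finset.erase_ssubset he) h

lemma card_le_of_inj {p : ℕ} [Fact p.Prime] {n : ℕ} (v : Fin n → Fin n → ZMod p)
    (hv : LinearIndependent (ZMod p) v) (I : Finset (Fin n))
    (W : Submodule (ZMod p) (Fin n → ZMod p)) (hW : ∀ i ∈ I, v i ∈ W) :
    I.card ≤ Module.finrank (ZMod p) W := by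
  let g : I → W := fun i => ⟨v i, hW i i.2⟩
  have hg : LinearIndependent (ZMod p) g := by
    apply LinearIndependent.of_comp W.subtype
    exact hv.comp (fun i : I => (i : Fin n)) Subtype.val_injective
  simpa using hg.fintype_card_le_finrank

theorem stmt_0 (p : ℕ) (hp : p.Prime) (hp61 : 61 < p) (hp79 : p ≠ 79)
    (n : ℕ) (hn : 1 ≤ n)
    (M : Matrix (Fin n) (Fin n) (ZMod p)) (hM : IsUnit M.det)
    (c d : Fin n → ZMod p) :
    ∃ x : Fin n → ZMod p, (∀ i, x i ≠ c i) ∧ (∀ i, M.mulVec x i ≠ d i) := by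
  haveI : Fact p.Prime := ⟨hp⟩
  obtain ⟨S, hSne, hScard, hS⟩ := balanced_exists hp61 hp79
  by_contra hcon
  let a : Fin n ⊕ Fin n → Fin n → ZMod p := Sum.elim (fun i => Pi.single i 1) (fun j => M j)
  let k : Fin n ⊕ Fin n → ZMod p := Sum.elim c d
  have hcov : ∀ x : Fin n → ZMod p, ∃ e ∈ (Finset.univ : Finset (Fin n ⊕ Fin n)),
      a e ⬝ᵥ x = k e := by
    intro x
    by_contra! h
    refine hcon ⟨x, fun i hi => ?_, fun j hj => ?_⟩
    · exact h (Sum.inl i) (Finset.mem_univ _) (by simpa [a, k] using hi)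
    · exact h (Sum.inr j) (Finset.mem_univ _) hj
  obtain ⟨X, hX, hmin⟩ := exists_min_cover (fun e x => a e ⬝ᵥ x = k e) _ hcov
  have hb := card_bound X a S (fun s => repr_lemma X a k hX hmin S hSne hS _ s rfl)
  set W := Submodule.span (ZMod p) (a '' X) with hW
  have hL : X.toLeft.card ≤ Module.finrank (ZMod p) W := by
    refine card_le_of_inj (fun i => Pi.single i 1) ?_ _ W ?_
    · exact Pi.linearIndependent_single_one (Fin n) (ZMod p)
    · intro i hi
      exact Submodule.subset_span ⟨Sum.inl i, by simpa using hi, rfl⟩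
  have hR : X.toRight.card ≤ Module.finrank (ZMod p) W := by
    refine card_le_of_inj (fun i => M i) ?_ _ W ?_
    · exact Matrix.linearIndependent_rows_of_isUnit ((Matrix.isUnit_iff_isUnit_det _).2 hM)
    · intro i hi
      exact Submodule.subset_span ⟨Sum.inr i, by simpa using hi, rfl⟩
  have hXc : X.toLeft.card + X.toRight.card = X.card := Finset.card_toLeft_add_card_toRight
  have hXpos : 0 < X.card := by
    obtain ⟨e, he, -⟩ := hX 0
    exact Finset.card_pos.2 ⟨e, he⟩
  have hr : Module.finrank (ZMod p) W ≠ 0 := by omega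
  have h1 : S.card ^ X.card ≤ S.card ^ (2 * Module.finrank (ZMod p) W) :=
    Nat.pow_le_pow_right (Finset.card_pos.2 hSne) (by omega)
  rw [pow_mul, sq] at h1
  have h2 := Nat.pow_lt_pow_left hScard hr
  omega
end

section
/- Let p > 3 be a prime. Assume that for every integer n ≥ 1 and every nonsingular n×n matrix M over F_p with row vectors a_1,…,a_n, the identity ∏_{i=1}^n (1 − g^{e_i}) · ∏_{i=1}^n (1 − g^{a_i}) = 0 in the group algebra F_p[F_p^n] implies the identity ∏_{i=1}^n (1 − g^{e_i}) · ∏_{i=1}^n (1 − g^{a_i}) = 0 in the group algebra ℤ[F_p^n]. Then for every integer n ≥ 1 and every nonsingular n×n matrix M over F_p there exists a vector x ∈ F_p^n such that x_i ≠ 0 for every 1 ≤ i ≤ n and (Mx)_i ≠ 0 for every 1 ≤ i ≤ n. -/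
open Finset in
/-- Fourier injectivity: an element killed by all characters vanishes. -/
theorem fourier_eq {p : ℕ} [Fact p.Prime] {N : ℕ} (ψ : AddChar (ZMod p) ℂ) (hψ : ψ.IsPrimitive)
    (φ : (Fin N → ZMod p) → (AddMonoidAlgebra ℤ (Fin N → ZMod p) →+* ℂ))
    (hφ : ∀ x v, ∀ c : ℤ, φ x (AddMonoidAlgebra.single v c) = c * ψ (v ⬝ᵥ x))
    (f : AddMonoidAlgebra ℤ (Fin N → ZMod p)) (hf : ∀ x, φ x f = 0) : f = 0 := by
  classical
  have horth : ∀ w : Fin N → ZMod p, ∑ x : Fin N → ZMod p, ψ (w ⬝ᵥ x) =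
      if w = 0 then (Fintype.card (Fin N → ZMod p) : ℂ) else 0 := by
    intro w
    split_ifs with hw
    · subst hw
      simp
    · obtain ⟨i, hi⟩ : ∃ i, w i ≠ 0 := by
        by_contra! h
        exact hw (funext h)
      let χ : AddChar (Fin N → ZMod p) ℂ :=
        { toFun := fun x => ψ (w ⬝ᵥ x)
          map_zero_eq_one' := by simp
          map_add_eq_mul' := by
            intro a b
            rw [dotProduct_add, AddChar.map_add_eq_mul] }
      have hχ : χ ≠ 1 := by
        intro h
        obtain ⟨y, hy⟩ := AddChar.ne_one_iff.1 (hψ hi)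
        apply hy
        have := DFunLike.congr_fun h (Pi.single i y)
        simpa [χ, AddChar.mulShift_apply, dotProduct_single] using this
      exact AddChar.sum_eq_zero_of_ne_one hχ
  have hexp : ∀ x, φ x f = ∑ v : Fin N → ZMod p, (f.coeff v : ℂ) * ψ (v ⬝ᵥ x) := by
    intro x
    conv_lhs => rw [← AddMonoidAlgebra.sum_coeff_single f]
    rw [Finsupp.sum_fintype _ _ (by simp), map_sum]
    simp [hφ]
  apply AddMonoidAlgebra.ext
  refine Finsupp.ext fun v => ?_
  have h1 : ∑ x : Fin N → ZMod p, φ x f * ψ ((-v) ⬝ᵥ x) = 0 := by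
    simp [hf]
  have h2 : ∑ x : Fin N → ZMod p, φ x f * ψ ((-v) ⬝ᵥ x)
      = (f.coeff v : ℂ) * (Fintype.card (Fin N → ZMod p) : ℂ) := by
    calc _ = ∑ x : Fin N → ZMod p, ∑ w : Fin N → ZMod p,
          (f.coeff w : ℂ) * ψ ((w - v) ⬝ᵥ x) := by
          refine Finset.sum_congr rfl fun x _ => ?_
          rw [hexp, Finset.sum_mul]
          refine Finset.sum_congr rfl fun w _ => ?_
          rw [mul_assoc, ← AddChar.map_add_eq_mul, ← add_dotProduct, sub_eq_add_neg]
      _ = ∑ w : Fin N → ZMod p, (f.coeff w : ℂ) * ∑ x : Fin N → ZMod p, ψ ((w - v) ⬝ᵥ x) := by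
          rw [Finset.sum_comm]
          simp_rw [Finset.mul_sum]
      _ = _ := by
          simp_rw [horth, sub_eq_zero]
          simp
  rw [h1] at h2
  have h3 : (Fintype.card (Fin N → ZMod p) : ℂ) ≠ 0 := by
    exact_mod_cast Fintype.card_ne_zero
  have h4 : (f.coeff v : ℂ) = 0 := by
    rcases mul_eq_zero.1 h2.symm with h | h
    · exact h
    · exact absurd h h3
  simpa using h4

/-- The evaluation ring homomorphisms attached to a character. -/
theorem exists_eval {p : ℕ} [Fact p.Prime] (N : ℕ) (ψ : AddChar (ZMod p) ℂ) :
    ∃ φ : (Fin N → ZMod p) → (AddMonoidAlgebra ℤ (Fin N → ZMod p) →+* ℂ),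
      ∀ x v, ∀ c : ℤ, φ x (AddMonoidAlgebra.single v c) = c * ψ (v ⬝ᵥ x) := by
  refine ⟨fun x => ((AddMonoidAlgebra.lift ℤ ℂ (Fin N → ZMod p))
    { toFun := fun v => ψ (v.toAdd ⬝ᵥ x)
      map_one' := by simp
      map_mul' := by
        intro a b
        simp [add_dotProduct, AddChar.map_add_eq_mul] }).toRingHom, ?_⟩
  intro x v c
  simp [AddMonoidAlgebra.lift_single]

theorem single_pow_zero {p : ℕ} [Fact p.Prime] {N : ℕ} (s : Fin N → ZMod p) :
    ((1 : AddMonoidAlgebra (ZMod p) (Fin N → ZMod p)) - AddMonoidAlgebra.single s 1) ^ p = 0 := by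
  haveI : CharP (AddMonoidAlgebra (ZMod p) (Fin N → ZMod p)) p :=
    charP_of_injective_algebraMap
      (FaithfulSMul.algebraMap_injective (ZMod p) (AddMonoidAlgebra (ZMod p) (Fin N → ZMod p))) p
  rw [sub_pow_char, one_pow, AddMonoidAlgebra.single_pow]
  have : p • s = 0 := by
    ext i
    simp
  rw [this, one_pow, AddMonoidAlgebra.one_def, sub_self]

/-- General step: rows `A` and modified rows `B`. -/
theorem key_step {p : ℕ} [Fact p.Prime] {N : ℕ} (A B : Fin N → Fin N → ZMod p)
    (s : Fin N → ZMod p)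
    (T : Fin p → Fin N) (hT : Function.Injective T) (hTB : ∀ k, B (T k) = s)
    (hAB : ∀ x : Fin N → ZMod p, (∀ i, x i ≠ 0) →
      (∀ i, A i ⬝ᵥ x = B i ⬝ᵥ x) ∨ ∃ i, A i = B i ∧ A i ⬝ᵥ x = 0) :
    ((∏ i : Fin N, ((1 : AddMonoidAlgebra (ZMod p) (Fin N → ZMod p)) -
          AddMonoidAlgebra.single (Pi.single i 1) 1)) *
        (∏ i : Fin N, ((1 : AddMonoidAlgebra (ZMod p) (Fin N → ZMod p)) -
          AddMonoidAlgebra.single (A i) 1)) = 0) := by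
  classical
  have hZ : (∏ i : Fin N, ((1 : AddMonoidAlgebra ℤ (Fin N → ZMod p)) -
          AddMonoidAlgebra.single (Pi.single i 1) 1)) *
        (∏ i : Fin N, ((1 : AddMonoidAlgebra ℤ (Fin N → ZMod p)) -
          AddMonoidAlgebra.single (A i) 1)) =
      (∏ i : Fin N, ((1 : AddMonoidAlgebra ℤ (Fin N → ZMod p)) -
          AddMonoidAlgebra.single (Pi.single i 1) 1)) *
        (∏ i : Fin N, ((1 : AddMonoidAlgebra ℤ (Fin N → ZMod p)) -
          AddMonoidAlgebra.single (B i) 1)) := by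
    obtain ⟨φ, hφ⟩ := exists_eval (p := p) N ZMod.stdAddChar
    rw [← sub_eq_zero]
    refine fourier_eq ZMod.stdAddChar (ZMod.isPrimitive_stdAddChar p) φ hφ _ fun x => ?_
    rw [map_sub, sub_eq_zero, map_mul, map_mul, map_prod, map_prod, map_prod]
    simp only [map_sub, map_one, hφ]
    by_cases hx : ∀ i, x i ≠ 0
    · rcases hAB x hx with h | ⟨i, h1, h2⟩
      · simp only [h]
      · have hA0 : ∏ i : Fin N, (1 - ((1 : ℤ) : ℂ) * ZMod.stdAddChar (A i ⬝ᵥ x)) = 0 :=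
          Finset.prod_eq_zero (Finset.mem_univ i) (by simp [h2])
        have hB0 : ∏ i : Fin N, (1 - ((1 : ℤ) : ℂ) * ZMod.stdAddChar (B i ⬝ᵥ x)) = 0 :=
          Finset.prod_eq_zero (Finset.mem_univ i) (by rw [← h1]; simp [h2])
        rw [hA0, hB0]
    · push Not at hx
      obtain ⟨i, hi⟩ := hx
      have : ∏ i : Fin N, (1 - ((1 : ℤ) : ℂ) *
          ZMod.stdAddChar ((Pi.single i 1 : Fin N → ZMod p) ⬝ᵥ x)) = 0 :=
        Finset.prod_eq_zero (Finset.mem_univ i) (by simp [hi])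
      rw [this, zero_mul, zero_mul]
  have hF := congrArg (AddMonoidAlgebra.mapRingHom (Fin N → ZMod p) (Int.castRingHom (ZMod p))) hZ
  simp only [map_mul, map_prod, map_sub, map_one, AddMonoidAlgebra.mapRingHom_single] at hF
  rw [hF]
  apply mul_eq_zero_of_right
  apply zero_dvd_iff.1
  rw [← single_pow_zero s]
  have h1 : ((1 : AddMonoidAlgebra (ZMod p) (Fin N → ZMod p)) - AddMonoidAlgebra.single s 1) ^ p
      = ∏ i ∈ Finset.univ.image T, ((1 : AddMonoidAlgebra (ZMod p) (Fin N → ZMod p)) -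
          AddMonoidAlgebra.single (B i) 1) := by
    rw [Finset.prod_image (fun a _ b _ h => hT h)]
    simp [hTB]
  rw [h1]
  exact Finset.prod_dvd_prod_of_subset _ _ _ (Finset.subset_univ _)

theorem nonvanish {p : ℕ} [Fact p.Prime] {N : ℕ} (A : Fin N → Fin N → ZMod p)
    (x : Fin N → ZMod p) (hx : ∀ i, x i ≠ 0) (hA : ∀ i, A i ⬝ᵥ x ≠ 0) :
    (∏ i : Fin N, ((1 : AddMonoidAlgebra ℤ (Fin N → ZMod p)) -
          AddMonoidAlgebra.single (Pi.single i 1) 1)) *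
        (∏ i : Fin N, ((1 : AddMonoidAlgebra ℤ (Fin N → ZMod p)) -
          AddMonoidAlgebra.single (A i) 1)) ≠ 0 := by
  obtain ⟨φ, hφ⟩ := exists_eval (p := p) N ZMod.stdAddChar
  have hne : ∀ y : ZMod p, y ≠ 0 → (1 : ℂ) - ZMod.stdAddChar y ≠ 0 := by
    intro y hy h
    apply hy
    apply ZMod.injective_stdAddChar
    rw [AddChar.map_zero_eq_one]
    exact (sub_eq_zero.1 h).symm
  intro h
  have h' := congrArg (φ x) h
  simp only [map_mul, map_prod, map_sub, map_one, hφ, map_zero, mul_eq_zero,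
    Finset.prod_eq_zero_iff] at h'
  rcases h' with ⟨i, _, hi⟩ | ⟨i, _, hi⟩
  · exact hne _ (hx i) (by simpa using hi)
  · exact hne _ (hA i) (by simpa using hi)


/-- **Theorem C.** For a prime `p > 3`, if for every `n ≥ 1` and every nonsingular matrix
`M` the vanishing of `∏ (1 - g^{e i}) * ∏ (1 - g^{a i})` in `F_p[F_p^n]` implies its
vanishing in `ℤ[F_p^n]`, then the Alon–Jaeger–Tarsi conjecture holds for `p`. -/
theorem stmt_2 (p : ℕ) (hp : p.Prime) (hp3 : 3 < p)
    (H : ∀ n : ℕ, 1 ≤ n → ∀ M : Matrix (Fin n) (Fin n) (ZMod p), IsUnit M.det →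
      ((∏ i : Fin n, ((1 : AddMonoidAlgebra (ZMod p) (Fin n → ZMod p)) -
          AddMonoidAlgebra.single (Pi.single i 1) 1)) *
        (∏ i : Fin n, ((1 : AddMonoidAlgebra (ZMod p) (Fin n → ZMod p)) -
          AddMonoidAlgebra.single (M i) 1)) = 0) →
      ((∏ i : Fin n, ((1 : AddMonoidAlgebra ℤ (Fin n → ZMod p)) -
          AddMonoidAlgebra.single (Pi.single i 1) 1)) *
        (∏ i : Fin n, ((1 : AddMonoidAlgebra ℤ (Fin n → ZMod p)) -
          AddMonoidAlgebra.single (M i) 1)) = 0)) :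
    ∀ n : ℕ, 1 ≤ n → ∀ M : Matrix (Fin n) (Fin n) (ZMod p), IsUnit M.det →
      ∃ x : Fin n → ZMod p, (∀ i, x i ≠ 0) ∧ (∀ i, M.mulVec x i ≠ 0) := by
  classical
  haveI : Fact p.Prime := ⟨hp⟩
  intro n hn M hM
  by_contra hcon
  push Not at hcon
  -- choose a nowhere zero vector with as many nonzero products as possible
  let X : Finset (Fin n → ZMod p) := Finset.univ.filter fun x => ∀ i, x i ≠ 0
  let supp : (Fin n → ZMod p) → Finset (Fin n) := fun x =>
    Finset.univ.filter fun i => M.mulVec x i ≠ 0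
  obtain ⟨x₀, hx₀, hmax⟩ := Finset.exists_max_image X (fun x => (supp x).card)
    ⟨fun _ => 1, by simp [X]⟩
  have hx₀' : ∀ i, x₀ i ≠ 0 := by simpa [X] using hx₀
  have hS : ∀ x : Fin n → ZMod p, (∀ i, x i ≠ 0) → (∀ i ∈ supp x₀, M.mulVec x i ≠ 0) →
      ∀ i, i ∉ supp x₀ → M.mulVec x i = 0 := by
    intro x hx hxS i hi
    by_contra hne
    have h1 : supp x₀ ⊂ supp x := by
      refine Finset.ssubset_iff_subset_ne.2 ⟨fun j hj => by simpa [supp] using hxS j hj, ?_⟩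
      intro heq
      apply hi
      rw [heq]
      simpa [supp] using hne
    have h2 := hmax x (by simpa [X] using hx)
    exact absurd (Finset.card_lt_card h1) (not_lt.2 h2)
  obtain ⟨i₀, hi₀⟩ := hcon x₀ hx₀'
  have hi₀S : i₀ ∉ supp x₀ := by simp [supp, hi₀]
  -- the big matrix
  let C : Matrix (Fin n × Fin p) Unit (ZMod p) := fun r _ => if r.1 ∈ supp x₀ then 0 else 1
  let D : Matrix ((Fin n × Fin p) ⊕ Unit) ((Fin n × Fin p) ⊕ Unit) (ZMod p) := Matrix.fromBlocks (Matrix.blockDiagonal fun _ : Fin p => M) C 0 1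
  have hD : IsUnit D.det := by
    simp only [D, Matrix.det_fromBlocks_zero₂₁, Matrix.det_blockDiagonal, Matrix.det_one, mul_one,
      Finset.prod_const]
    exact hM.pow _
  let N := Fintype.card ((Fin n × Fin p) ⊕ Unit)
  let e : Fin N ≃ ((Fin n × Fin p) ⊕ Unit) := (Fintype.equivFin ((Fin n × Fin p) ⊕ Unit)).symm
  have hDl : ∀ (y : ((Fin n × Fin p) ⊕ Unit) → ZMod p) (i : Fin n) (k : Fin p), D (Sum.inl (i, k)) ⬝ᵥ y =
      M.mulVec (fun j => y (Sum.inl (j, k))) i +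
        (if i ∈ supp x₀ then 0 else y (Sum.inr ())) := by
    intro y i k
    have h1 : ∀ a b, D (Sum.inl (i, k)) (Sum.inl (a, b)) = if k = b then M i a else 0 := by
      intro a b
      exact Matrix.blockDiagonal_apply (fun _ : Fin p => M) (i, k) (a, b)
    have h2 : ∀ u, D (Sum.inl (i, k)) (Sum.inr u) = if i ∈ supp x₀ then 0 else 1 :=
      fun u => rfl
    simp only [dotProduct, Fintype.sum_sum_type, Fintype.sum_prod_type, Matrix.mulVec, h1, h2]
    simp [ite_mul]
  have hDr : ∀ y : ((Fin n × Fin p) ⊕ Unit) → ZMod p, D (Sum.inr ()) ⬝ᵥ y = y (Sum.inr ()) := by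
    intro y
    simp [dotProduct, Fintype.sum_sum_type, D]
  let A : Matrix (Fin N) (Fin N) (ZMod p) := D.submatrix e e
  have hA : ∀ (x : Fin N → ZMod p) (r : Fin N), A r ⬝ᵥ x = D (e r) ⬝ᵥ (x ∘ e.symm) := by
    intro x r
    simp only [dotProduct, A, Matrix.submatrix_apply]
    exact Fintype.sum_equiv e _ _ (fun j => by simp)
  let s : Fin N → ZMod p := Pi.single (e.symm (Sum.inr ())) 1
  let B : Fin N → Fin N → ZMod p := fun r =>
    Sum.elim (fun q : Fin n × Fin p => if q.1 ∈ supp x₀ then A r else s) (fun _ => A r) (e r)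
  have hNpos : 1 ≤ N := Fintype.card_pos_iff.2 ⟨Sum.inr ()⟩
  refine nonvanish A ((Sum.elim (fun q : Fin n × Fin p => x₀ q.1) (fun _ => 1) : ((Fin n × Fin p) ⊕ Unit) → ZMod p) ∘ e)
    ?_ ?_ (H N hNpos A (by simpa [A, Matrix.det_submatrix_equiv_self] using hD) ?_)
  · intro i
    simp only [Function.comp]
    rcases e i with q | q
    · simpa using hx₀' q.1
    · simp
  · intro i
    rw [hA]
    rcases e i with ⟨q, k⟩ | ⟨⟩
    · rw [hDl]
      by_cases hq : q ∈ supp x₀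
      · have hq' : M.mulVec x₀ q ≠ 0 := by simpa [supp] using hq
        simpa [hq] using hq'
      · have : M.mulVec x₀ q = 0 := by simpa [supp] using hq
        simp [hq, this]
    · rw [hDr]
      simp
  · refine key_step A B s (fun k => e.symm (Sum.inl (i₀, k))) ?_ ?_ ?_
    · intro a b h
      simpa using h
    · intro k
      simp [B, hi₀S]
    · intro x hx
      by_cases hall : ∀ k : Fin p, ∀ i ∈ supp x₀,
          M.mulVec (fun j => x (e.symm (Sum.inl (j, k)))) i ≠ 0
      · left
        intro r
        rcases hr : e r with ⟨q, k⟩ | ⟨⟩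
        · by_cases hq : q ∈ supp x₀
          · simp [B, hr, hq]
          · have h0 := hS _ (fun j => hx _) (hall k) q hq
            rw [hA, hr, hDl]
            simp only [B, hr, Sum.elim_inl, hq, if_false, Function.comp, s, single_dotProduct,
              one_mul]
            rw [h0, zero_add]
        · simp [B, hr]
      · right
        push Not at hall
        obtain ⟨k, i, hi, h0⟩ := hall
        refine ⟨e.symm (Sum.inl (i, k)), by simp [B, hi], ?_⟩
        rw [hA, Equiv.apply_symm_apply, hDl]
        simp only [Function.comp, hi, if_true, add_zero]
        exact h0
end

section
/- Let k ≥ 2 be an integer and let p > k^{32k} be a prime. Then F_p can be written as a disjoint union F_p = A_1 ∪ A_2 ∪ … ∪ A_m with m = ⌈p^{1/(2k+1)}⌉, where each A_j (1 ≤ j ≤ m) is N_k-type. In particular, there exists an N_k-type subset of F_p of size at most p / ⌈p^{1/(2k+1)}⌉ ≤ p^{2k/(2k+1)}. -/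
/-- A subset `A ⊆ F_p` is `S_k`-type if every `a ∈ A` is the midpoint of a `(2k+1)`-term
arithmetic progression with nonzero common difference contained in `A`. -/
def SkType (p k : ℕ) (A : Finset (ZMod p)) : Prop :=
  ∀ a ∈ A, ∃ d : ZMod p, d ≠ 0 ∧ ∀ i : ℤ, -(k : ℤ) ≤ i → i ≤ (k : ℤ) → a + i • d ∈ A

/-- A subset `A ⊆ F_p` is `N_k`-type if it is `S_k`-type and moreover every `a ∉ A` is the
starting point of a `(k+1)`-term arithmetic progression whose other `k` terms lie in `A`. -/
def NkType (p k : ℕ) (A : Finset (ZMod p)) : Prop :=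
  SkType p k A ∧
    ∀ a : ZMod p, a ∉ A →
      ∃ d : ZMod p, d ≠ 0 ∧ ∀ i : ℤ, 1 ≤ i → i ≤ (k : ℤ) → a + i • d ∈ A

lemma count_bad {X D I : Type} [Fintype X] [DecidableEq X] [Fintype D] [DecidableEq D]
    [Fintype I] [DecidableEq I] (m : ℕ)
    (e : D × I → X) (he : Function.Injective e) (j : Fin m) :
    Fintype.card {c : X → Fin m // ∀ d, ∃ i, c (e (d, i)) ≠ j} ≤
      (m ^ Fintype.card I - 1) ^ Fintype.card D *
        m ^ (Fintype.card X - Fintype.card D * Fintype.card I) := by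
  classical
  let Φ : {c : X → Fin m // ∀ d, ∃ i, c (e (d, i)) ≠ j} →
      (D → {f : I → Fin m // f ≠ fun _ => j}) × ({x // ¬ x ∈ Set.range e} → Fin m) :=
    fun c => (fun d => ⟨fun i => c.1 (e (d, i)), by
      intro h
      obtain ⟨i, hi⟩ := c.2 d
      exact hi (congrFun h i)⟩, fun x => c.1 x.1)
  have hΦ : Function.Injective Φ := by
    rintro ⟨c, hc⟩ ⟨c', hc'⟩ h
    have h1 := congrArg Prod.fst h
    have h2 := congrArg Prod.snd h
    apply Subtype.ext
    funext x
    by_cases hx : x ∈ Set.range e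
    · obtain ⟨⟨d, i⟩, rfl⟩ := hx
      have := congrArg Subtype.val (congrFun h1 d)
      exact congrFun this i
    · exact congrFun h2 ⟨x, hx⟩
  refine (Fintype.card_le_of_injective Φ hΦ).trans (le_of_eq ?_)
  rw [Fintype.card_prod, Fintype.card_fun, Fintype.card_fun, Fintype.card_fin,
    Fintype.card_subtype_compl, Fintype.card_subtype_compl, Fintype.card_fun, Fintype.card_fin,
    Fintype.card_subtype_eq]
  congr 3
  rw [← Fintype.card_prod]
  exact Set.card_range_of_injective he

lemma exists_D (p k : ℕ) [Fact p.Prime] (hk : 2 ≤ k) (hpk : 2 * k < p) :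
    ∃ D : Finset (ZMod p), (0 : ZMod p) ∉ D ∧
      (∀ d ∈ D, ∀ d' ∈ D, ∀ i ∈ (Finset.Icc (-(k : ℤ)) k).erase 0,
        ∀ i' ∈ (Finset.Icc (-(k : ℤ)) k).erase 0,
        (i : ZMod p) * d = i' * d' → d = d' ∧ i = i') ∧
      p - 1 ≤ D.card * ((2 * k) * (2 * k)) := by
  classical
  set I := (Finset.Icc (-(k : ℤ)) k).erase 0 with hI
  have hIc : I.card = 2 * k := by
    rw [hI, Finset.card_erase_of_mem (by simp), Int.card_Icc]; omega
  have hinj : ∀ i ∈ I, ∀ i' ∈ I, (i : ZMod p) = i' → i = i' := by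
    intro i hi i' hi' h
    rw [ZMod.intCast_eq_intCast_iff_dvd_sub] at h
    simp only [hI, Finset.mem_erase, Finset.mem_Icc] at hi hi'
    have := Int.eq_zero_of_abs_lt_dvd h (by rw [abs_lt]; constructor <;> omega)
    omega
  have hne : ∀ i ∈ I, (i : ZMod p) ≠ 0 := by
    intro i hi h
    rw [ZMod.intCast_zmod_eq_zero_iff_dvd] at h
    simp only [hI, Finset.mem_erase, Finset.mem_Icc] at hi
    have := Int.eq_zero_of_abs_lt_dvd h (by rw [abs_lt]; constructor <;> omega)
    omega
  let P : Finset (ZMod p) → Prop := fun D => (0 : ZMod p) ∉ D ∧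
      (∀ d ∈ D, ∀ d' ∈ D, ∀ i ∈ I, ∀ i' ∈ I, (i : ZMod p) * d = i' * d' → d = d' ∧ i = i')
  obtain ⟨D, hD⟩ := Set.Finite.exists_maximal (Set.toFinite {D | P D})
    ⟨∅, by simp [P]⟩
  refine ⟨D, hD.1.1, hD.1.2, ?_⟩
  have hcov : (Finset.univ.erase (0 : ZMod p)) ⊆
      (D ×ˢ (I ×ˢ I)).image (fun x => (x.2.1 : ZMod p) * x.1 * (x.2.2 : ZMod p)⁻¹) := by
    intro d hd
    have hd0 : d ≠ 0 := by simpa using hd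
    by_contra hcon
    have hno : ∀ d' ∈ D, ∀ i ∈ I, ∀ i' ∈ I, (i : ZMod p) * d' ≠ i' * d := by
      intro d' hd' i hi i' hi' h
      apply hcon
      rw [Finset.mem_image]
      refine ⟨(d', i, i'), by simp [hd', hi, hi'], ?_⟩
      have := hne i' hi'
      simp only
      rw [h]; field_simp
    have hPd : P (insert d D) := by
      refine ⟨by simp [hD.1.1, hd0.symm], ?_⟩
      intro a ha b hb i hi i' hi' h
      rw [Finset.mem_insert] at ha hb
      rcases ha with rfl | ha <;> rcases hb with rfl | hb
      · exact ⟨rfl, hinj i hi i' hi' (mul_right_cancel₀ hd0 h)⟩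
      · exact absurd h.symm (hno b hb i' hi' i hi)
      · exact absurd h (hno a ha i hi i' hi')
      · exact hD.1.2 a ha b hb i hi i' hi' h
    have hsub := hD.2 hPd (Finset.subset_insert d D)
    have hdD : d ∈ D := hsub (Finset.mem_insert_self d D)
    have h1 : (1 : ℤ) ∈ I := by simp [hI]; omega
    exact hno d hdD 1 h1 1 h1 rfl
  have := (Finset.card_le_card hcov).trans Finset.card_image_le
  rwa [Finset.card_erase_of_mem (Finset.mem_univ _), Finset.card_univ, ZMod.card,
    Finset.card_product, Finset.card_product, hIc] at this

lemma numeric (k m p D : ℕ) (hk : 2 ≤ k) (hm1 : p ≤ m ^ (2 * k + 1))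
    (hm2 : (m - 1) ^ (2 * k + 1) < p) (hp : k ^ (32 * k) < p)
    (hD : p - 1 ≤ D * ((2 * k) * (2 * k))) :
    (p : ℝ) * m * (((m : ℝ) ^ (2 * k) - 1) / (m : ℝ) ^ (2 * k)) ^ D < 1 := by
  have hkm : k ^ 12 ≤ m := by
    by_contra! h
    have h1 : m ^ (2 * k + 1) ≤ (k ^ 12) ^ (2 * k + 1) := Nat.pow_le_pow_left h.le _
    have h2 : (k ^ 12) ^ (2 * k + 1) ≤ k ^ (32 * k) := by
      rw [← pow_mul]; exact Nat.pow_le_pow_right (by omega) (by omega)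
    omega
  have hm0 : 1 ≤ m := le_trans (Nat.one_le_pow _ _ (by omega)) hkm
  have hmR : (0 : ℝ) < m := by exact_mod_cast hm0
  have hkR : (2 : ℝ) ≤ k := by exact_mod_cast hk
  obtain ⟨u, hu0, hu⟩ : ∃ u : ℝ, 0 ≤ u ∧ u ^ 12 = m :=
    ⟨(m : ℝ) ^ ((12 : ℕ) : ℝ)⁻¹, by positivity, Real.rpow_inv_natCast_pow hmR.le (by norm_num)⟩
  have hku : (k : ℝ) ≤ u := by
    apply le_of_pow_le_pow_left₀ (n := 12) (by norm_num) hu0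
    rw [hu]; exact_mod_cast hkm
  have hu2 : 2 ≤ u := hkR.trans hku
  have hlog : Real.log m ≤ 12 * (u - 1) := by
    rw [← hu, Real.log_pow]
    have := Real.log_le_sub_one_of_pos (show 0 < u by linarith)
    push_cast; linarith
  have hu8 : 256 ≤ u ^ 8 := by
    calc (256 : ℝ) = 2 ^ 8 := by norm_num
      _ ≤ u ^ 8 := pow_le_pow_left₀ (by norm_num) hu2 8
  have hu4 : 16 ≤ u ^ 4 := by
    calc (16 : ℝ) = 2 ^ 4 := by norm_num
      _ ≤ u ^ 4 := pow_le_pow_left₀ (by norm_num) hu2 4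
  have hm256 : 256 * u ^ 4 ≤ m := by
    rw [← hu]; nlinarith [pow_nonneg hu0 4]
  have hm4k : 4 * (k : ℝ) ≤ m := by nlinarith [pow_nonneg hu0 4, pow_le_pow_left₀ (by norm_num) hu2 3, pow_nonneg hu0 3]
  have hlog0 : 0 ≤ Real.log m := Real.log_nonneg (by exact_mod_cast hm0)
  have hmain : 16 * (k : ℝ) ^ 2 * (k + 1) * Real.log m < m - 1 := by
    have h1 : 16 * (k : ℝ) ^ 2 * (k + 1) * Real.log m ≤ 16 * u ^ 2 * (u + 1) * (12 * (u - 1)) := by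
      gcongr
    nlinarith [sq_nonneg u]
  have hbern : (1 / 2 : ℝ) * (m : ℝ) ^ (2 * k) ≤ ((m : ℝ) - 1) ^ (2 * k) := by
    have h1 := one_add_mul_le_pow (a := -(1 / (m : ℝ))) (by
      have : 1 / (m : ℝ) ≤ 1 := by rw [div_le_one hmR]; exact_mod_cast hm0
      linarith) (2 * k)
    have h2 : (1 / 2 : ℝ) ≤ (1 + -(1 / (m : ℝ))) ^ (2 * k) := by
      refine le_trans ?_ h1
      have : 2 * (k : ℝ) / m ≤ 1 / 2 := by rw [div_le_iff₀ hmR]; linarith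
      push_cast
      have h3 : 2 * (k : ℝ) * -(1 / (m : ℝ)) = - (2 * (k : ℝ) / m) := by ring
      rw [h3]; linarith
    have h3 : ((m : ℝ) - 1) = (1 + -(1 / (m : ℝ))) * m := by field_simp; ring
    rw [h3, mul_pow]
    gcongr
  have hDR : ((m : ℝ) - 1) ^ (2 * k + 1) ≤ D * (4 * (k : ℝ) ^ 2) := by
    have h1 : (m - 1) ^ (2 * k + 1) ≤ D * ((2 * k) * (2 * k)) := by omega
    have h2 : (((m - 1 : ℕ) : ℝ)) ^ (2 * k + 1) ≤ D * ((2 * k) * (2 * k)) := by exact_mod_cast h1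
    rw [Nat.cast_sub hm0] at h2
    push_cast at h2
    linarith
  set M : ℝ := (m : ℝ) ^ (2 * k) with hM
  have hM0 : 0 < M := by positivity
  have hM1 : 1 ≤ M := one_le_pow₀ (by exact_mod_cast hm0)
  have hkey : (2 * (k : ℝ) + 2) * Real.log m < D / M := by
    rw [lt_div_iff₀ hM0]
    have hm1' : (0 : ℝ) < (m : ℝ) - 1 := by
      refine lt_of_le_of_lt ?_ hmain; positivity
    have h1 : (1 / 2 * M) * ((m : ℝ) - 1) ≤ D * (4 * (k : ℝ) ^ 2) := by
      refine le_trans ?_ hDR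
      rw [pow_succ]; gcongr
    have h2 : (1 / 2 * M) * (16 * (k : ℝ) ^ 2 * (k + 1) * Real.log m) <
        (1 / 2 * M) * ((m : ℝ) - 1) := by
      gcongr
    have h3 : (4 * (k : ℝ) ^ 2) * ((2 * (k : ℝ) + 2) * Real.log m * M) < (4 * (k : ℝ) ^ 2) * D := by
      linarith
    exact lt_of_mul_lt_mul_left h3 (by positivity)
  have hexp : ((M - 1) / M) ^ D ≤ Real.exp (-(D / M)) := by
    have h1 : (M - 1) / M ≤ Real.exp (-(1 / M)) := by
      have := Real.add_one_le_exp (-(1 / M))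
      have h2 : (M - 1) / M = -(1 / M) + 1 := by field_simp; ring
      rw [h2]; exact this
    calc ((M - 1) / M) ^ D ≤ (Real.exp (-(1 / M))) ^ D :=
          pow_le_pow_left₀ (div_nonneg (by linarith) hM0.le) h1 D
      _ = Real.exp (-(D / M)) := by rw [← Real.exp_nat_mul]; congr 1; ring
  have hpm : (p : ℝ) * m ≤ Real.exp ((2 * (k : ℝ) + 2) * Real.log m) := by
    have h1 : (p : ℝ) ≤ (m : ℝ) ^ (2 * k + 1) := by exact_mod_cast hm1
    have h2 : Real.exp ((2 * (k : ℝ) + 2) * Real.log m) = (m : ℝ) ^ (2 * k + 2) := by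
      rw [← Real.exp_log (show 0 < (m : ℝ) ^ (2 * k + 2) by positivity), Real.log_pow]
      push_cast; rfl
    rw [h2, pow_succ]
    gcongr
  calc (p : ℝ) * m * ((M - 1) / M) ^ D
      ≤ Real.exp ((2 * (k : ℝ) + 2) * Real.log m) * Real.exp (-(D / M)) := by
        gcongr
    _ = Real.exp ((2 * (k : ℝ) + 2) * Real.log m - D / M) := by rw [← Real.exp_add]; rfl
    _ < 1 := by rw [Real.exp_lt_one_iff]; linarith

lemma exists_coloring (k m p : ℕ) [Fact p.Prime] (hk : 2 ≤ k) (hm1 : p ≤ m ^ (2 * k + 1))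
    (hm2 : (m - 1) ^ (2 * k + 1) < p) (hp : k ^ (32 * k) < p) :
    ∃ c : ZMod p → Fin m, ∀ a : ZMod p, ∀ j : Fin m, ∃ d : ZMod p, d ≠ 0 ∧
      ∀ i ∈ (Finset.Icc (-(k : ℤ)) k).erase 0, c (a + i • d) = j := by
  classical
  have h2k : 2 * k < p := by
    refine lt_of_le_of_lt ?_ hp
    calc 2 * k ≤ k ^ 2 := by nlinarith
      _ ≤ k ^ (32 * k) := Nat.pow_le_pow_right (by omega) (by omega)
  obtain ⟨D, hD0, hDinj, hDc⟩ := exists_D p k hk h2k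
  set I := (Finset.Icc (-(k : ℤ)) k).erase 0 with hI
  have hIc : I.card = 2 * k := by
    rw [hI, Finset.card_erase_of_mem (by simp), Int.card_Icc]; omega
  have hnum := numeric k m p D.card hk hm1 hm2 hp hDc
  have hm0 : 0 < m := by
    rcases Nat.eq_zero_or_pos m with h | h
    · subst h; simp at hm1; omega
    · exact h
  let e : ZMod p → D × I → ZMod p := fun a x => a + x.2.1 • x.1.1
  have he : ∀ a, Function.Injective (e a) := by
    rintro a ⟨⟨d, hd⟩, ⟨i, hi⟩⟩ ⟨⟨d', hd'⟩, ⟨i', hi'⟩⟩ h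
    simp only [e, add_right_inj, zsmul_eq_mul] at h
    obtain ⟨rfl, rfl⟩ := hDinj d hd d' hd' i hi i' hi' h
    rfl
  by_contra! hcon
  let bad : ZMod p × Fin m → Finset (ZMod p → Fin m) := fun x =>
    Finset.univ.filter (fun c => ∀ d : D, ∃ i : I, c (e x.1 (d, i)) ≠ x.2)
  set B := (m ^ (2 * k) - 1) ^ D.card * m ^ (p - D.card * (2 * k)) with hB
  have hbad : ∀ x, (bad x).card ≤ B := by
    intro x
    have := count_bad m (e x.1) (he x.1) x.2
    rw [Fintype.card_subtype] at this
    rw [Fintype.card_coe, Fintype.card_coe, hIc, ZMod.card] at this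
    exact this
  have hcover : (Finset.univ : Finset (ZMod p → Fin m)) ⊆ Finset.univ.biUnion bad := by
    intro c _
    obtain ⟨a, j, h⟩ := hcon c
    rw [Finset.mem_biUnion]
    refine ⟨(a, j), Finset.mem_univ _, ?_⟩
    simp only [bad, Finset.mem_filter, Finset.mem_univ, true_and]
    rintro ⟨d, hd⟩
    obtain ⟨i, hi, hne⟩ := h d (fun h => hD0 (h ▸ hd))
    exact ⟨⟨i, hi⟩, hne⟩
  have hcard : m ^ p ≤ p * m * B := by
    have h1 := (Finset.card_le_card hcover).trans
      (Finset.card_biUnion_le_card_mul _ _ B (fun x _ => hbad x))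
    simpa [ZMod.card] using h1
  have hDle : D.card * (2 * k) ≤ p := by
    have := Fintype.card_le_of_injective _ (he 0)
    simpa [hIc, ZMod.card] using this
  have hmR : (0 : ℝ) < m := by exact_mod_cast hm0
  have hcR : (m : ℝ) ^ p ≤ p * m * (((m : ℝ) ^ (2 * k) - 1) ^ D.card * (m : ℝ) ^ (p - D.card * (2 * k))) := by
    have h1 : ((m ^ (2 * k) - 1 : ℕ) : ℝ) = (m : ℝ) ^ (2 * k) - 1 := by
      rw [Nat.cast_sub (Nat.one_le_pow _ _ hm0)]; push_cast; rfl
    rw [← h1]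
    exact_mod_cast hcard
  have hsplit : (m : ℝ) ^ p = ((m : ℝ) ^ (2 * k)) ^ D.card * (m : ℝ) ^ (p - D.card * (2 * k)) := by
    rw [← pow_mul, ← pow_add]; congr 1
    rw [mul_comm (2 * k)]; omega
  rw [hsplit, ← mul_assoc ((p : ℝ) * m)] at hcR
  have hcR2 := le_of_mul_le_mul_right hcR (by positivity)
  rw [div_pow, ← mul_div_assoc, div_lt_one (by positivity)] at hnum
  linarith

/-- For `k ≥ 2` and a prime `p > k^(32k)`, the field `F_p` is a disjoint union of
`m = ⌈p^(1/(2k+1))⌉` sets, each of `N_k`-type; in particular some `N_k`-type set has size at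
most `p/m ≤ p^(2k/(2k+1))`. -/
theorem stmt_6 (k : ℕ) (hk : 2 ≤ k) (p : ℕ) (hp : p.Prime) (hpk : k ^ (32 * k) < p) :
    ∃ A : Fin (⌈(p : ℝ) ^ ((1 : ℝ) / (2 * (k : ℝ) + 1))⌉₊) → Finset (ZMod p),
      (∀ i j, i ≠ j → Disjoint (A i) (A j)) ∧
      (∀ x : ZMod p, ∃ j, x ∈ A j) ∧
      (∀ j, NkType p k (A j)) ∧
      (∃ j, ((A j).card : ℝ) ≤ (p : ℝ) / (⌈(p : ℝ) ^ ((1 : ℝ) / (2 * (k : ℝ) + 1))⌉₊ : ℝ) ∧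
        (p : ℝ) / (⌈(p : ℝ) ^ ((1 : ℝ) / (2 * (k : ℝ) + 1))⌉₊ : ℝ) ≤
          (p : ℝ) ^ ((2 * (k : ℝ)) / (2 * (k : ℝ) + 1))) := by
  have : Fact p.Prime := ⟨hp⟩
  classical
  have hp0 : (0 : ℝ) < p := by exact_mod_cast hp.pos
  have hk0 : (0 : ℝ) < 2 * (k : ℝ) + 1 := by positivity
  set x : ℝ := (p : ℝ) ^ ((1 : ℝ) / (2 * (k : ℝ) + 1)) with hx
  have hx0 : 0 < x := by positivity
  have hxp : x ^ (2 * k + 1) = p := by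
    rw [hx, ← Real.rpow_natCast, ← Real.rpow_mul hp0.le]
    push_cast
    rw [one_div_mul_cancel hk0.ne', Real.rpow_one]
  set m : ℕ := ⌈x⌉₊ with hm
  have hm0 : 0 < m := Nat.ceil_pos.mpr hx0
  have hmR : (0 : ℝ) < m := by exact_mod_cast hm0
  have hxm : x ≤ m := Nat.le_ceil x
  have hm1 : p ≤ m ^ (2 * k + 1) := by
    have : (p : ℝ) ≤ (m : ℝ) ^ (2 * k + 1) := by
      rw [← hxp]; gcongr
    exact_mod_cast this
  have hm2 : (m - 1) ^ (2 * k + 1) < p := by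
    have h1 : ((m - 1 : ℕ) : ℝ) < x := by
      rw [← Nat.lt_ceil]; omega
    have : ((m - 1 : ℕ) : ℝ) ^ (2 * k + 1) < (p : ℝ) := by
      rw [← hxp]; exact pow_lt_pow_left₀ h1 (by positivity) (by omega)
    exact_mod_cast this
  obtain ⟨c, hc⟩ := exists_coloring k m p hk hm1 hm2 hpk
  refine ⟨fun j => Finset.univ.filter (fun y => c y = j), ?_, ?_, ?_, ?_⟩
  · intro i j hij
    rw [Finset.disjoint_left]
    intro y hy hy'
    simp only [Finset.mem_filter, Finset.mem_univ, true_and] at hy hy'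
    exact hij (hy.symm.trans hy')
  · intro y
    exact ⟨c y, by simp⟩
  · intro j
    refine ⟨?_, ?_⟩
    · intro a ha
      obtain ⟨d, hd, h⟩ := hc a j
      refine ⟨d, hd, fun i h1 h2 => ?_⟩
      by_cases hi : i = 0
      · subst hi; simpa using ha
      · simpa using h i (by simp [hi, h1, h2])
    · intro a _
      obtain ⟨d, hd, h⟩ := hc a j
      refine ⟨d, hd, fun i h1 h2 => ?_⟩
      have hmem : i ∈ (Finset.Icc (-(k : ℤ)) k).erase 0 := by
        rw [Finset.mem_erase, Finset.mem_Icc]; omega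
      simpa using h i hmem
  · have hpig : ∃ j : Fin m, (Finset.univ.filter (fun y => c y = j)).card * m ≤ p := by
      by_contra! hcon
      have h1 : ∑ j : Fin m, (Finset.univ.filter (fun y => c y = j)).card = p := by
        have := Finset.card_eq_sum_card_fiberwise (f := c) (s := Finset.univ)
          (t := Finset.univ) (fun _ _ => Finset.mem_coe.mpr (Finset.mem_univ _))
        rw [Finset.card_univ, ZMod.card] at this
        exact this.symm
      have h2 : ∑ j : Fin m, p < ∑ j : Fin m, (Finset.univ.filter (fun y => c y = j)).card * m :=
        Finset.sum_lt_sum_of_nonempty ⟨⟨0, hm0⟩, Finset.mem_univ _⟩ (fun j _ => hcon j)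
      rw [← Finset.sum_mul, h1] at h2
      simp [mul_comm] at h2
    obtain ⟨j, hj⟩ := hpig
    refine ⟨j, ?_, ?_⟩
    · rw [le_div_iff₀ hmR]
      exact_mod_cast hj
    · rw [div_le_iff₀ hmR]
      have h1 : (p : ℝ) = (p : ℝ) ^ ((2 * (k : ℝ)) / (2 * (k : ℝ) + 1)) * x := by
        rw [hx, ← Real.rpow_add hp0, ← add_div, div_self hk0.ne', Real.rpow_one]
      calc (p : ℝ) = (p : ℝ) ^ ((2 * (k : ℝ)) / (2 * (k : ℝ) + 1)) * x := h1
        _ ≤ _ := by gcongr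
end

section
/- Let p > 3 be a prime, n ≥ 1 an integer, M a nonsingular n×n matrix over F_p with row vectors a_1,…,a_n, and let ω ∈ ℂ be a primitive p-th root of unity. For each 1 ≤ i ≤ n let 0 ≤ t_i ≤ p−1 and 0 ≤ t'_i ≤ p−1 be integers, let c_{i,1},…,c_{i,t_i} ∈ F_p be pairwise distinct and d_{i,1},…,d_{i,t'_i} ∈ F_p be pairwise distinct. Then the following are equivalent: (P1) there is no vector x ∈ F_p^n such that x_i ≠ c_{i,k} for all 1 ≤ i ≤ n, 1 ≤ k ≤ t_i and (Mx)_i ≠ d_{i,k} for all 1 ≤ i ≤ n, 1 ≤ k ≤ t'_i; (P3) the element ∏_{1 ≤ i ≤ n, 1 ≤ k ≤ t_i} (1 − ω^{−c_{i,k}} g^{e_i}) · ∏_{1 ≤ i ≤ n, 1 ≤ k ≤ t'_i} (1 − ω^{−d_{i,k}} g^{a_i}) of the complex group algebra ℂ[F_p^n] is zero. -/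
/-- The evaluation homomorphism `g^v ↦ ψ (v ⬝ x)`. -/
noncomputable def charHom {p n : ℕ} (ψ : AddChar (ZMod p) ℂ) (x : Fin n → ZMod p) :
    AddMonoidAlgebra ℂ (Fin n → ZMod p) →ₐ[ℂ] ℂ :=
  AddMonoidAlgebra.lift ℂ ℂ (Fin n → ZMod p)
    { toFun := fun v => ψ (v.toAdd ⬝ᵥ x)
      map_one' := by simp
      map_mul' := fun a b => by simp [add_dotProduct, AddChar.map_add_eq_mul] }

theorem charHom_single {p n : ℕ} (ψ : AddChar (ZMod p) ℂ) (x v : Fin n → ZMod p) (r : ℂ) :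
    charHom ψ x (AddMonoidAlgebra.single v r) = r * ψ (v ⬝ᵥ x) := by
  simp [charHom, AddMonoidAlgebra.lift_single]

theorem sum_char {p n : ℕ} [NeZero p] (ψ : AddChar (ZMod p) ℂ) (hψ : ∀ a, ψ a = 1 ↔ a = 0)
    (v : Fin n → ZMod p) (hv : v ≠ 0) : ∑ x : Fin n → ZMod p, ψ (v ⬝ᵥ x) = 0 := by
  classical
  let χ : AddChar (Fin n → ZMod p) ℂ :=
    { toFun := fun x => ψ (v ⬝ᵥ x)
      map_zero_eq_one' := by simp
      map_add_eq_mul' := fun a b => by simp [dotProduct_add, AddChar.map_add_eq_mul] }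
  have h := AddChar.sum_eq_ite χ
  rw [if_neg] at h
  · exact h
  · intro h0
    apply hv
    funext i
    have h1 : χ (Pi.single i 1) = 1 := by rw [h0]; simp
    have h2 : ψ (v ⬝ᵥ Pi.single i 1) = 1 := h1
    rw [hψ] at h2
    simpa using h2

theorem inversion {p n : ℕ} [NeZero p] (ψ : AddChar (ZMod p) ℂ) (hψ : ∀ a, ψ a = 1 ↔ a = 0)
    (w : Fin n → ZMod p) (f : AddMonoidAlgebra ℂ (Fin n → ZMod p)) :
    ∑ x, charHom ψ x f * ψ (-(w ⬝ᵥ x)) = Fintype.card (Fin n → ZMod p) * f.coeff w := by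
  classical
  induction f using AddMonoidAlgebra.induction_linear with
  | zero => simp
  | add f g hf hg =>
    simp only [map_add, add_mul, Finset.sum_add_distrib, hf, hg]
    simp [mul_add]
  | single m r =>
    have h : ∀ x, charHom ψ x (AddMonoidAlgebra.single m r) * ψ (-(w ⬝ᵥ x))
        = r * ψ ((m - w) ⬝ᵥ x) := fun x => by
      rw [charHom_single, mul_assoc, ← AddChar.map_add_eq_mul, sub_dotProduct, sub_eq_add_neg]
    simp only [h, ← Finset.mul_sum, AddMonoidAlgebra.coeff_single]
    by_cases hm : m = w
    · subst hm
      simp [mul_comm]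
    · rw [sum_char ψ hψ _ (sub_ne_zero.mpr hm), Finsupp.single_apply, if_neg hm]
      simp

theorem eq_zero_iff_charHom {p n : ℕ} [NeZero p] (ψ : AddChar (ZMod p) ℂ)
    (hψ : ∀ a, ψ a = 1 ↔ a = 0) (f : AddMonoidAlgebra ℂ (Fin n → ZMod p)) :
    f = 0 ↔ ∀ x, charHom ψ x f = 0 := by
  constructor
  · rintro rfl x
    simp
  · intro h
    apply AddMonoidAlgebra.ext
    apply Finsupp.ext
    intro w
    have := inversion ψ hψ w f
    simp only [h, zero_mul, Finset.sum_const_zero] at this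
    have h2 := (mul_eq_zero.mp this.symm).resolve_left
      (Nat.cast_ne_zero.mpr Fintype.card_ne_zero)
    simpa using h2

/-- **Proposition (equivalence of (P1) and (P3)).** Let `p > 3` be prime, `M` nonsingular
with rows `a i = M i`, `ω` a primitive `p`-th root of unity in `ℂ`, and forbidden values
`c i k` (pairwise distinct in `k`) and `d i k` (pairwise distinct in `k`). Then no vector
`x` avoids all the forbidden values (`x i ≠ c i k` and `(Mx) i ≠ d i k`) if and only if
`∏_{i,k} (1 - ω^{-c i k} g^{e i}) * ∏_{i,k} (1 - ω^{-d i k} g^{a i}) = 0` in `ℂ[F_p^n]`. -/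
theorem stmt_11 (p : ℕ) (hp : p.Prime) (hp3 : 3 < p) (n : ℕ) (hn : 1 ≤ n)
    (M : Matrix (Fin n) (Fin n) (ZMod p)) (hM : IsUnit M.det)
    (ω : ℂ) (hω : IsPrimitiveRoot ω p)
    (t t' : Fin n → ℕ) (ht : ∀ i, t i ≤ p - 1) (ht' : ∀ i, t' i ≤ p - 1)
    (c : (i : Fin n) → Fin (t i) → ZMod p) (hc : ∀ i, Function.Injective (c i))
    (d : (i : Fin n) → Fin (t' i) → ZMod p) (hd : ∀ i, Function.Injective (d i)) :
    (¬ ∃ x : Fin n → ZMod p,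
        (∀ i k, x i ≠ c i k) ∧ (∀ i k, M.mulVec x i ≠ d i k)) ↔
    ((∏ i : Fin n, ∏ k : Fin (t i),
        ((1 : AddMonoidAlgebra ℂ (Fin n → ZMod p)) -
          AddMonoidAlgebra.single (Pi.single i 1) (ω ^ (-(c i k)).val))) *
      (∏ i : Fin n, ∏ k : Fin (t' i),
        ((1 : AddMonoidAlgebra ℂ (Fin n → ZMod p)) -
          AddMonoidAlgebra.single (M i) (ω ^ (-(d i k)).val))) = 0) := by
  have : NeZero p := ⟨hp.ne_zero⟩
  let ψ : AddChar (ZMod p) ℂ := AddChar.zmodChar p hω.pow_eq_one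
  have hψ : ∀ a, ψ a = 1 ↔ a = 0 :=
    (AddChar.zmodChar_primitive_of_primitive_root p hω).zmod_char_eq_one_iff p
  have key : ∀ (v x : Fin n → ZMod p) (a : ZMod p),
      charHom ψ x (1 - AddMonoidAlgebra.single v (ω ^ (-a).val)) = 0 ↔ v ⬝ᵥ x = a := by
    intro v x a
    have h1 : ω ^ (-a).val = ψ (-a) := (AddChar.zmodChar_apply hω.pow_eq_one (-a)).symm
    rw [map_sub, map_one, charHom_single, h1, ← AddChar.map_add_eq_mul, sub_eq_zero, eq_comm, hψ,
      neg_add_eq_zero, eq_comm]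
  rw [eq_zero_iff_charHom ψ hψ, not_exists]
  refine forall_congr' fun x => ?_
  rw [map_mul, mul_eq_zero, map_prod, map_prod, Finset.prod_eq_zero_iff, Finset.prod_eq_zero_iff]
  simp only [map_prod, Finset.prod_eq_zero_iff, key, Finset.mem_univ, true_and]
  simp only [single_one_dotProduct, Matrix.mulVec]
  rw [not_and_or]
  push Not
  rfl
end

section
/- Let p > 3 be a prime, n ≥ 1 an integer, M a nonsingular n×n matrix over F_p with row vectors a_1,…,a_n. For each 1 ≤ i ≤ n let 0 ≤ t_i ≤ p−1 and 0 ≤ t'_i ≤ p−1 be integers, let c_{i,1},…,c_{i,t_i} ∈ F_p be pairwise distinct and d_{i,1},…,d_{i,t'_i} ∈ F_p be pairwise distinct. If there is no vector x ∈ F_p^n such that x_i ≠ c_{i,k} for all 1 ≤ i ≤ n, 1 ≤ k ≤ t_i and (Mx)_i ≠ d_{i,k} for all 1 ≤ i ≤ n, 1 ≤ k ≤ t'_i, then ∏_{i=1}^n (1 − g^{e_i})^{t_i} · ∏_{i=1}^n (1 − g^{a_i})^{t'_i} = 0 in the group algebra F_p[F_p^n]. -/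
open Polynomial in
lemma aux_ring (p : ℕ) (hp : p.Prime) (hp3 : 3 < p) :
    ∃ (R : Type) (_ : CommRing R) (_ : IsDomain R) (w : R) (φ : R →+* ZMod p),
      w ^ p = 1 ∧ w ≠ 1 ∧ (p : R) ≠ 0 ∧ φ w = 1 := by
  haveI : Fact p.Prime := ⟨hp⟩
  have hirr : Irreducible (cyclotomic p ℤ) := cyclotomic.irreducible hp.pos
  have hdeg : (cyclotomic p ℤ).natDegree = p - 1 := by
    rw [natDegree_cyclotomic, Nat.totient_prime hp]
  have hdom : IsDomain (AdjoinRoot (cyclotomic p ℤ)) :=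
    AdjoinRoot.isDomain_of_prime hirr.prime
  refine ⟨AdjoinRoot (cyclotomic p ℤ), inferInstance, hdom, AdjoinRoot.root _,
    AdjoinRoot.lift (Int.castRingHom (ZMod p)) 1 ?_, ?_, ?_, ?_, ?_⟩
  · rw [← eval_map, map_cyclotomic, eval_one_cyclotomic_prime]
    simp
  · have h1 : AdjoinRoot.mk (cyclotomic p ℤ) (X ^ p - 1) = 0 :=
      AdjoinRoot.mk_eq_zero.2 (cyclotomic.dvd_X_pow_sub_one p ℤ)
    rw [map_sub, map_pow, AdjoinRoot.mk_X, map_one] at h1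
    exact sub_eq_zero.1 h1
  · intro h
    have h1 : AdjoinRoot.mk (cyclotomic p ℤ) (X - C 1) = 0 := by
      rw [map_sub, AdjoinRoot.mk_X, map_one, map_one, h, sub_self]
    have h2 := natDegree_le_of_dvd (AdjoinRoot.mk_eq_zero.1 h1) (X_sub_C_ne_zero 1)
    rw [natDegree_X_sub_C, hdeg] at h2
    omega
  · intro h
    have h1 : AdjoinRoot.mk (cyclotomic p ℤ) (C (p : ℤ)) = 0 := by
      simpa using h
    have h2 := natDegree_le_of_dvd (AdjoinRoot.mk_eq_zero.1 h1)
      (by simpa using hp.ne_zero)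
    rw [natDegree_C, hdeg] at h2
    omega
  · simp

/-- the character `v ↦ ψ (v ⬝ x)` -/
noncomputable def auxChar {p n : ℕ} {R : Type} [CommRing R] (ψ : AddChar (ZMod p) R)
    (x : Fin n → ZMod p) : AddChar (Fin n → ZMod p) R where
  toFun v := ψ (v ⬝ᵥ x)
  map_zero_eq_one' := by simp
  map_add_eq_mul' a b := by simp [AddChar.map_add_eq_mul]

noncomputable def auxEval {p n : ℕ} {R : Type} [CommRing R] (ψ : AddChar (ZMod p) R)
    (x : Fin n → ZMod p) : AddMonoidAlgebra R (Fin n → ZMod p) →ₐ[R] R :=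
  AddMonoidAlgebra.lift R R (Fin n → ZMod p) (auxChar ψ x).toMonoidHom

lemma auxEval_single {p n : ℕ} {R : Type} [CommRing R] (ψ : AddChar (ZMod p) R)
    (x v : Fin n → ZMod p) (r : R) :
    auxEval ψ x (AddMonoidAlgebra.single v r) = r * ψ (v ⬝ᵥ x) := by
  simp [auxEval, AddMonoidAlgebra.lift_single, auxChar]

lemma aux_orth {p n : ℕ} [Fact p.Prime] {R : Type} [CommRing R] [IsDomain R]
    (ψ : AddChar (ZMod p) R) (hψ : ψ 1 ≠ 1) (v : Fin n → ZMod p) (hv : v ≠ 0) :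
    ∑ x : Fin n → ZMod p, ψ (v ⬝ᵥ x) = 0 := by
  have h : auxChar (n := n) ψ v ≠ 1 := by
    intro h1
    obtain ⟨i, hi⟩ := Function.ne_iff.1 hv
    have hi : v i ≠ 0 := hi
    have h2 := DFunLike.congr_fun h1 (Pi.single i (v i)⁻¹)
    apply hψ
    have h3 : auxChar ψ v (Pi.single i (v i)⁻¹) = ψ (Pi.single i (v i)⁻¹ ⬝ᵥ v) := rfl
    rw [h3, single_dotProduct, inv_mul_cancel₀ hi] at h2
    simpa using h2
  have := AddChar.sum_eq_zero_of_ne_one h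
  rw [← this]
  refine Finset.sum_congr rfl fun x _ => ?_
  rw [dotProduct_comm]; rfl

lemma aux_inv {p n : ℕ} [Fact p.Prime] {R : Type} [CommRing R] [IsDomain R]
    (ψ : AddChar (ZMod p) R) (hψ : ψ 1 ≠ 1) (w : Fin n → ZMod p)
    (f : AddMonoidAlgebra R (Fin n → ZMod p)) :
    ∑ x : Fin n → ZMod p, ψ (-(w ⬝ᵥ x)) * auxEval ψ x f = (p : R) ^ n * f.coeff w := by
  induction f using AddMonoidAlgebra.induction_linear with
  | zero => simp
  | add f g hf hg => simp [mul_add, Finset.sum_add_distrib, hf, hg]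
  | single v r =>
    have : ∀ x : Fin n → ZMod p, ψ (-(w ⬝ᵥ x)) * auxEval ψ x (AddMonoidAlgebra.single v r)
        = r * ψ ((v - w) ⬝ᵥ x) := by
      intro x
      rw [auxEval_single, sub_dotProduct, sub_eq_neg_add, AddChar.map_add_eq_mul]; ring
    rw [Finset.sum_congr rfl fun x _ => this x, ← Finset.mul_sum]
    by_cases hvw : v = w
    · subst hvw
      simp [mul_comm, ZMod.card]
    · rw [aux_orth ψ hψ _ (sub_ne_zero.2 hvw)]
      simp [Finsupp.single_apply, hvw]


/-- **Proposition ((P1) implies (P4)).** Let `p > 3` be prime, `M` nonsingular with rows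
`a i = M i`, and forbidden values `c i k` (pairwise distinct in `k`) and `d i k`
(pairwise distinct in `k`). If no vector `x` avoids all the forbidden values, then
`∏ i, (1 - g^{e i})^(t i) * ∏ i, (1 - g^{a i})^(t' i) = 0` in `F_p[F_p^n]`. -/
theorem stmt_12 (p : ℕ) (hp : p.Prime) (hp3 : 3 < p) (n : ℕ) (hn : 1 ≤ n)
    (M : Matrix (Fin n) (Fin n) (ZMod p)) (hM : IsUnit M.det)
    (t t' : Fin n → ℕ) (ht : ∀ i, t i ≤ p - 1) (ht' : ∀ i, t' i ≤ p - 1)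
    (c : (i : Fin n) → Fin (t i) → ZMod p) (hc : ∀ i, Function.Injective (c i))
    (d : (i : Fin n) → Fin (t' i) → ZMod p) (hd : ∀ i, Function.Injective (d i))
    (h : ¬ ∃ x : Fin n → ZMod p,
        (∀ i k, x i ≠ c i k) ∧ (∀ i k, M.mulVec x i ≠ d i k)) :
    (∏ i : Fin n, ((1 : AddMonoidAlgebra (ZMod p) (Fin n → ZMod p)) -
        AddMonoidAlgebra.single (Pi.single i 1) 1) ^ (t i)) *
      (∏ i : Fin n, ((1 : AddMonoidAlgebra (ZMod p) (Fin n → ZMod p)) -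
        AddMonoidAlgebra.single (M i) 1) ^ (t' i)) = 0 := by
  haveI : Fact p.Prime := ⟨hp⟩
  obtain ⟨R, _, _, w, φ, hw, hw1, hp0, hφ⟩ := aux_ring p hp hp3
  let ψ : AddChar (ZMod p) R := AddChar.zmodChar p hw
  have hψ1 : ψ 1 ≠ 1 := by
    have : ψ 1 = w := by
      have := AddChar.zmodChar_apply' hw 1
      simpa using this
    rwa [this]
  have hφψ : ∀ a, φ (ψ a) = 1 := by
    intro a
    rw [AddChar.zmodChar_apply, map_pow, hφ, one_pow]
  let F : AddMonoidAlgebra R (Fin n → ZMod p) :=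
    (∏ i : Fin n, ∏ k : Fin (t i), (AddMonoidAlgebra.single 0 (ψ (c i k)) -
        AddMonoidAlgebra.single (Pi.single i 1) 1)) *
      (∏ i : Fin n, ∏ k : Fin (t' i), (AddMonoidAlgebra.single 0 (ψ (d i k)) -
        AddMonoidAlgebra.single (M i) 1))
  have hF : ∀ x, auxEval ψ x F = 0 := by
    intro x
    have hx : (∃ i k, x i = c i k) ∨ (∃ i k, M.mulVec x i = d i k) := by
      by_contra hcon
      push Not at hcon
      exact h ⟨x, hcon⟩
    simp only [F, map_mul, map_prod, map_sub, auxEval_single]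
    rcases hx with ⟨i, k, hik⟩ | ⟨i, k, hik⟩
    · apply mul_eq_zero_of_left
      refine Finset.prod_eq_zero (Finset.mem_univ i) (Finset.prod_eq_zero (Finset.mem_univ k) ?_)
      simp [hik]
    · apply mul_eq_zero_of_right
      refine Finset.prod_eq_zero (Finset.mem_univ i) (Finset.prod_eq_zero (Finset.mem_univ k) ?_)
      have : M i ⬝ᵥ x = d i k := hik
      simp [this]
  have hF0 : F = 0 := by
    ext v
    have := aux_inv ψ hψ1 v F
    simp only [hF, mul_zero, Finset.sum_const_zero] at this
    simpa [hp0] using this.symm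
  have key := congrArg (AddMonoidAlgebra.mapRingHom (Fin n → ZMod p) φ) hF0
  simpa [F, map_mul, map_prod, hφψ, ← AddMonoidAlgebra.one_def] using key
end

section
/- Let p be a prime, n ≥ 1 an integer, let v_1,…,v_m ∈ F_p^n be vectors, let t_1,…,t_m be integers with 0 ≤ t_j ≤ p−1, and let λ_1,…,λ_m ∈ F_p \ {0}. Then ∏_{j=1}^m (1 − g^{λ_j v_j})^{t_j} = 0 in the group algebra F_p[F_p^n] if and only if ∏_{j=1}^m (1 − g^{v_j})^{t_j} = 0 in F_p[F_p^n]. (Consequently, for a nonsingular matrix M with rows a_1,…,a_n, standard basis vectors e_1,…,e_n, exponents 0 ≤ t_i, t'_i ≤ p−1 and nonzero scalars λ_i, μ_i, the identity ∏_{i=1}^n (1 − g^{λ_i e_i})^{t_i} · ∏_{i=1}^n (1 − g^{μ_i a_i})^{t'_i} = 0 in F_p[F_p^n] holds if and only if ∏_{i=1}^n (1 − g^{e_i})^{t_i} · ∏_{i=1}^n (1 − g^{a_i})^{t'_i} = 0.) -/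
/-- `1 - g^v` divides `1 - g^{c v}` for every scalar `c`. -/
theorem one_sub_single_dvd (p : ℕ) (hp : p.Prime) (n : ℕ) (c : ZMod p) (w : Fin n → ZMod p) :
    ((1 : AddMonoidAlgebra (ZMod p) (Fin n → ZMod p)) - AddMonoidAlgebra.single w 1) ∣
      ((1 : AddMonoidAlgebra (ZMod p) (Fin n → ZMod p)) - AddMonoidAlgebra.single (c • w) 1) := by
  haveI : Fact p.Prime := ⟨hp⟩
  have h : c • w = c.val • w := by
    funext i
    simp [ZMod.natCast_zmod_val]
  have h2 : (AddMonoidAlgebra.single (c • w) 1 : AddMonoidAlgebra (ZMod p) (Fin n → ZMod p)) =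
      AddMonoidAlgebra.single w 1 ^ c.val := by
    rw [AddMonoidAlgebra.single_pow, one_pow, h]
  rw [h2]
  simpa using sub_dvd_pow_sub_pow
    (1 : AddMonoidAlgebra (ZMod p) (Fin n → ZMod p)) (AddMonoidAlgebra.single w 1) c.val

/-- **Lemma (dilation invariance of vanishing).** For vectors `v j ∈ F_p^n`, exponents
`0 ≤ t j ≤ p - 1`, and nonzero scalars `λ j`, one has
`∏ j, (1 - g^{λ j • v j})^(t j) = 0` in `F_p[F_p^n]` if and only if
`∏ j, (1 - g^{v j})^(t j) = 0`. -/
theorem stmt_15 (p : ℕ) (hp : p.Prime) (n : ℕ) (hn : 1 ≤ n) (m : ℕ)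
    (v : Fin m → (Fin n → ZMod p)) (t : Fin m → ℕ) (ht : ∀ j, t j ≤ p - 1)
    (lam : Fin m → ZMod p) (hlam : ∀ j, lam j ≠ 0) :
    ((∏ j : Fin m, ((1 : AddMonoidAlgebra (ZMod p) (Fin n → ZMod p)) -
        AddMonoidAlgebra.single (lam j • v j) 1) ^ (t j)) = 0) ↔
    ((∏ j : Fin m, ((1 : AddMonoidAlgebra (ZMod p) (Fin n → ZMod p)) -
        AddMonoidAlgebra.single (v j) 1) ^ (t j)) = 0) := by
  haveI : Fact p.Prime := ⟨hp⟩
  constructor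
  · intro h
    refine eq_zero_of_zero_dvd (h ▸ Finset.prod_dvd_prod_of_dvd _ _ fun j _ => pow_dvd_pow_of_dvd ?_ _)
    have := one_sub_single_dvd p hp n (lam j)⁻¹ (lam j • v j)
    rwa [smul_smul, inv_mul_cancel₀ (hlam j), one_smul] at this
  · intro h
    exact eq_zero_of_zero_dvd (h ▸ Finset.prod_dvd_prod_of_dvd _ _ fun j _ =>
      pow_dvd_pow_of_dvd (one_sub_single_dvd p hp n (lam j) (v j)) _)
end

section
/- Let p be a prime, n ≥ 1 an integer, and let M = (a_{i,j}) be an n×n matrix over F_p. Let r_1,…,r_n and s_1,…,s_n be integers with 0 ≤ r_i ≤ p−1 and 0 ≤ s_i ≤ p−1 for all i, and assume ∑_{i=1}^n s_i = ∑_{i=1}^n r_i. Then the coefficient of the monomial ∏_{i=1}^n x_i^{s_i} in the polynomial ∏_{i=1}^n (∑_{j=1}^n a_{i,j} x_j)^{r_i} ∈ F_p[x_1,…,x_n] is zero if and only if the coefficient of the monomial ∏_{j=1}^n x_j^{r_j} in the polynomial ∏_{j=1}^n (∑_{i=1}^n a_{i,j} x_i)^{s_j} ∈ F_p[x_1,…,x_n]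 is zero. (In fact ∏_{i=1}^n r_i! times the second coefficient equals ∏_{i=1}^n s_i! times the first coefficient in F_p, and the factorials are nonzero mod p since all r_i, s_i ≤ p−1.) -/
open Finset in
lemma aux_coeff {R : Type*} [CommRing R] (n : ℕ) (a : Fin n → Fin n → R) (r s : Fin n → ℕ) :
    MvPolynomial.coeff (Finsupp.equivFunOnFinite.symm s)
        (∏ i : Fin n, (∑ j : Fin n, MvPolynomial.C (a i j) * MvPolynomial.X j) ^ (r i))
    = ∑ m ∈ (Fintype.piFinset fun i => piAntidiag (univ : Finset (Fin n)) (r i)) with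
        (∀ j, ∑ i, m i j = s j),
        ((∏ i, Nat.multinomial univ (m i) : ℕ) : R) * ∏ i, ∏ j, a i j ^ m i j := by
  simp_rw [sum_pow_eq_sum_piAntidiag]
  rw [prod_univ_sum, MvPolynomial.coeff_sum, sum_filter]
  refine sum_congr rfl fun m _ => ?_
  have h : (∏ i, ((Nat.multinomial univ (m i) : MvPolynomial (Fin n) R) *
      ∏ j, (MvPolynomial.C (a i j) * MvPolynomial.X j) ^ m i j))
      = MvPolynomial.monomial (Finsupp.equivFunOnFinite.symm fun j => ∑ i, m i j)
        (((∏ i, Nat.multinomial univ (m i) : ℕ) : R) * ∏ i, ∏ j, a i j ^ m i j) := by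
    rw [MvPolynomial.monomial_eq, Finsupp.prod_fintype _ _ (by simp)]
    simp only [mul_pow, prod_mul_distrib, map_mul, map_prod, map_pow, map_natCast, Nat.cast_prod,
      Finsupp.equivFunOnFinite_symm_apply_apply, ← prod_pow_eq_pow_sum]
    rw [mul_assoc]
    congr 2
    exact prod_comm
  rw [h, MvPolynomial.coeff_monomial]
  congr 1
  simp only [EmbeddingLike.apply_eq_iff_eq, funext_iff]

open Finset in
lemma aux_dual {R : Type*} [CommRing R] (n : ℕ) (a : Fin n → Fin n → R) (r s : Fin n → ℕ) :
    ((∏ j, (s j).factorial : ℕ) : R) * MvPolynomial.coeff (Finsupp.equivFunOnFinite.symm s)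
        (∏ i : Fin n, (∑ j : Fin n, MvPolynomial.C (a i j) * MvPolynomial.X j) ^ (r i))
    = ((∏ j, (r j).factorial : ℕ) : R) * MvPolynomial.coeff (Finsupp.equivFunOnFinite.symm r)
        (∏ j : Fin n, (∑ i : Fin n, MvPolynomial.C (a i j) * MvPolynomial.X i) ^ (s j)) := by
  rw [aux_coeff, aux_coeff n (fun j i => a i j), mul_sum, mul_sum]
  refine sum_bij' (fun m _ j i => m i j) (fun m _ j i => m i j) ?_ ?_ ?_ ?_ ?_
  · intro m hm
    simp only [mem_filter, Fintype.mem_piFinset, mem_piAntidiag] at hm ⊢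
    exact ⟨fun j => ⟨hm.2 j, by simp⟩, fun i => (hm.1 i).1⟩
  · intro m hm
    simp only [mem_filter, Fintype.mem_piFinset, mem_piAntidiag] at hm ⊢
    exact ⟨fun j => ⟨hm.2 j, by simp⟩, fun i => (hm.1 i).1⟩
  · intros; rfl
  · intros; rfl
  · intro m hm
    simp only [mem_filter, Fintype.mem_piFinset, mem_piAntidiag] at hm
    rw [prod_comm (f := fun i j => a i j ^ m i j), ← mul_assoc, ← mul_assoc, ← Nat.cast_mul,
      ← Nat.cast_mul]
    congr 2
    have e1 : (∏ i, ∏ j, (m i j).factorial) * ∏ i, Nat.multinomial univ (m i)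
        = ∏ i, (r i).factorial := by
      rw [← prod_mul_distrib]
      exact prod_congr rfl fun i _ => by rw [Nat.multinomial_spec, (hm.1 i).1]
    have e2 : (∏ i, ∏ j, (m i j).factorial) * ∏ j, Nat.multinomial univ (fun i => m i j)
        = ∏ j, (s j).factorial := by
      rw [prod_comm, ← prod_mul_distrib]
      exact prod_congr rfl fun i _ => by
        rw [Nat.multinomial_spec univ (fun k => m k i), hm.2 i]
    rw [← e1, ← e2]
    ring

lemma aux_ne (p : ℕ) (hp : p.Prime) (n : ℕ) (r : Fin n → ℕ) (hr : ∀ i, r i ≤ p - 1) :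
    ((∏ j, (r j).factorial : ℕ) : ZMod p) ≠ 0 := by
  rw [Ne, ZMod.natCast_eq_zero_iff, hp.prime.dvd_finset_prod_iff]
  rintro ⟨i, _, h⟩
  have := hp.dvd_factorial.1 h
  have := hr i
  have := hp.pos
  omega

/-- **Lemma (duality of polynomial coefficients).** Let `a` be an `n × n` matrix over `F_p`
and `r, s : Fin n → ℕ` with `r i, s i ≤ p - 1` and `∑ s = ∑ r`. Then the coefficient of
`∏ x i ^ s i` in `∏ i, (∑ j, a i j * x j)^(r i)` vanishes iff the coefficient of
`∏ x j ^ r j` in `∏ j, (∑ i, a i j * x i)^(s j)` vanishes. -/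
theorem stmt_16 (p : ℕ) (hp : p.Prime) (n : ℕ) (hn : 1 ≤ n)
    (a : Matrix (Fin n) (Fin n) (ZMod p))
    (r s : Fin n → ℕ) (hr : ∀ i, r i ≤ p - 1) (hs : ∀ i, s i ≤ p - 1)
    (hsum : ∑ i, s i = ∑ i, r i) :
    (MvPolynomial.coeff (Finsupp.equivFunOnFinite.symm s)
        (∏ i : Fin n, (∑ j : Fin n, MvPolynomial.C (a i j) * MvPolynomial.X j) ^ (r i)) = 0)
    ↔
    (MvPolynomial.coeff (Finsupp.equivFunOnFinite.symm r)
        (∏ j : Fin n, (∑ i : Fin n, MvPolynomial.C (a i j) * MvPolynomial.X i) ^ (s j)) = 0)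
    := by

  haveI := Fact.mk hp
  have h := aux_dual n a r s
  have h1 := aux_ne p hp n r hr
  have h2 := aux_ne p hp n s hs
  constructor
  · intro h0
    rw [h0, mul_zero] at h
    exact (mul_eq_zero.1 h.symm).resolve_left h1
  · intro h0
    rw [h0, mul_zero] at h
    exact (mul_eq_zero.1 h).resolve_left h2
end

section
/- Let p > 3 be a prime, n ≥ 1 an integer, and M = (a_{i,j}) a nonsingular n×n matrix over F_p. Then the following are equivalent: (i) there is no vector x ∈ F_p^n with x_i ≠ 0 for all 1 ≤ i ≤ n and (Mx)_i ≠ 0 for all 1 ≤ i ≤ n; (ii) for all integers r_1,…,r_n, s_1,…,s_n with 1 ≤ r_i ≤ p−1 and 1 ≤ s_i ≤ p−1 for all i, one has ∑_{x ∈ F_p^n} ∏_{i=1}^n (∑_{j=1}^n a_{i,j} x_j)^{r_i} · ∏_{i=1}^n x_i^{s_i} = 0 in F_p. -/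
theorem delta_aux (p : ℕ) [hp : Fact p.Prime] (a y : ZMod p) (ha : a ≠ 0) :
    ∑ k ∈ Finset.Icc 1 (p - 1), (-(a⁻¹ ^ k)) * y ^ k = if y = a then 1 else 0 := by
  have hp2 := hp.out.two_le
  have h1 : ∀ k, (-(a⁻¹ ^ k)) * y ^ k = -((a⁻¹ * y) ^ k) := by
    intro k; rw [mul_pow]; ring
  simp only [h1, Finset.sum_neg_distrib]
  split_ifs with h
  · subst h
    rw [inv_mul_cancel₀ ha]
    simp [Nat.cast_sub (by omega : 1 ≤ p)]
  · have hz : a⁻¹ * y ≠ 1 := by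
      intro h2
      apply h
      have := congrArg (a * ·) h2
      simpa [← mul_assoc, ha] using this
    rw [neg_eq_zero]
    set z := a⁻¹ * y
    have h3 : ∑ k ∈ Finset.Icc 1 (p - 1), z ^ k = z * ∑ k ∈ Finset.range (p - 1), z ^ k := by
      rw [Finset.mul_sum, ← Finset.Ico_add_one_right_eq_Icc, Finset.sum_Ico_eq_sum_range]
      simp [pow_add]
    rw [h3, geom_sum_eq hz]
    by_cases h0 : z = 0
    · simp [h0]
    · rw [ZMod.pow_card_sub_one_eq_one h0]; simp

/-- **Lemma (polynomial characterisation of (P'1)).** Let `p > 3` be prime and `M` a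
nonsingular `n × n` matrix over `F_p`. Then there is no vector `x` with all `x i ≠ 0` and
all `(Mx) i ≠ 0` if and only if for all exponents `1 ≤ r i ≤ p - 1`, `1 ≤ s i ≤ p - 1`,
`∑_x ∏ i ((Mx) i)^(r i) * ∏ i (x i)^(s i) = 0` in `F_p`. -/
theorem stmt_17 (p : ℕ) [hp : Fact p.Prime] (hp3 : 3 < p) (n : ℕ) (hn : 1 ≤ n)
    (M : Matrix (Fin n) (Fin n) (ZMod p)) (hM : IsUnit M.det) :
    (¬ ∃ x : Fin n → ZMod p, (∀ i, x i ≠ 0) ∧ (∀ i, M.mulVec x i ≠ 0)) ↔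
    (∀ r s : Fin n → ℕ,
      (∀ i, 1 ≤ r i ∧ r i ≤ p - 1) → (∀ i, 1 ≤ s i ∧ s i ≤ p - 1) →
      ∑ x : Fin n → ZMod p,
        (∏ i : Fin n, (M.mulVec x i) ^ (r i)) * ∏ i : Fin n, (x i) ^ (s i) = 0) := by
  constructor
  · intro h r s hr hs
    refine Finset.sum_eq_zero fun x _ => ?_
    by_cases hx : ∀ i, x i ≠ 0
    · have : ∃ i, M.mulVec x i = 0 := by
        by_contra hc
        exact h ⟨x, hx, fun i hi => hc ⟨i, hi⟩⟩
      obtain ⟨i, hi⟩ := this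
      rw [Finset.prod_eq_zero (Finset.mem_univ i), zero_mul]
      rw [hi, zero_pow]
      have := hr i
      omega
    · push Not at hx
      obtain ⟨i, hi⟩ := hx
      rw [mul_comm, Finset.prod_eq_zero (Finset.mem_univ i), zero_mul]
      rw [hi, zero_pow]
      have := hs i
      omega
  · rintro h ⟨a, ha, hMa⟩
    let F : (Fin n → ZMod p) → ZMod p := fun x => ∏ i, (M.mulVec x i) ^ (p - 1)
    have e1 : ∑ x : Fin n → ZMod p, F x * ∏ i, (if x i = a i then (1 : ZMod p) else 0) = 1 := by
      rw [Finset.sum_eq_single a]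
      · simp [F, ZMod.pow_card_sub_one_eq_one (hMa _)]
      · intro b _ hb
        obtain ⟨i, hi⟩ := Function.ne_iff.mp hb
        rw [Finset.prod_eq_zero (Finset.mem_univ i) (by simp [hi]), mul_zero]
      · simp
    have e2 : ∑ x : Fin n → ZMod p, F x * ∏ i, (if x i = a i then (1 : ZMod p) else 0) = 0 := by
      have : ∀ x : Fin n → ZMod p, F x * ∏ i, (if x i = a i then (1 : ZMod p) else 0) =
          ∑ s ∈ Fintype.piFinset (fun _ : Fin n => Finset.Icc 1 (p - 1)),
            (∏ i, (-((a i)⁻¹ ^ s i))) * (F x * ∏ i, x i ^ s i) := by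
        intro x
        simp only [← delta_aux p (a _) (x _) (ha _)]
        rw [Finset.prod_univ_sum, Finset.mul_sum]
        refine Finset.sum_congr rfl fun s _ => ?_
        rw [Finset.prod_mul_distrib]
        ring
      simp only [this]
      rw [Finset.sum_comm]
      refine Finset.sum_eq_zero fun s hs => ?_
      rw [← Finset.mul_sum]
      have hs' : ∀ i, 1 ≤ s i ∧ s i ≤ p - 1 := by
        intro i
        exact Finset.mem_Icc.mp (Fintype.mem_piFinset.mp hs i)
      rw [h (fun _ => p - 1) s (fun _ => ⟨by omega, le_rfl⟩) hs', mul_zero]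
    rw [e1] at e2
    exact one_ne_zero e2
end

section
/- Let p > 3 be a prime. Then the following two statements are equivalent: (a) for every integer n ≥ 1 and every nonsingular n×n matrix M over F_p with row vectors a_1,…,a_n, if ∏_{i=1}^n (1 − g^{e_i}) · ∏_{i=1}^n (1 − g^{a_i}) = 0 in F_p[F_p^n] then ∏_{i=1}^n (1 − g^{e_i}) · ∏_{i=1}^n (1 − g^{a_i}) = 0 in ℤ[F_p^n]; (b) there do not exist an integer n ≥ 1 and a nonsingular n×n matrix M over F_p with row vectors a_1,…,a_n such that σ_{2n−i}((1 − g^{e_1}),…,(1 − g^{e_n}),(1 − g^{a_1}),…,(1 − g^{a_n})) = 0 in F_p[F_p^n] for every integer i with 0 ≤ i ≤ p−1, where σ_j denotes the j-th elementary symmetric polynomial evaluated at the 2n listed group-algebra elements, with the convention that σ_j = 0 for j < 0. -/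
open Polynomial in
theorem aux_esymm {A : Type*} [CommRing A] (s : Multiset A) (m p : ℕ) (hm : s.card = m) (hp : 0 < p) :
    (∀ i : ℕ, i ≤ p - 1 → (if i ≤ m then s.esymm (m - i) else 0) = 0) ↔
      (X : A[X]) ^ p ∣ (s.map (fun r => X + C r)).prod := by
  rw [X_pow_dvd_iff]
  have key : ∀ i : ℕ, (s.map (fun r => X + C r)).prod.coeff i =
      (if i ≤ m then s.esymm (m - i) else 0) := by
    intro i
    split_ifs with h
    · rw [Multiset.prod_X_add_C_coeff s (by omega), hm]
    · apply coeff_eq_zero_of_natDegree_lt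
      refine lt_of_le_of_lt (natDegree_multiset_prod_le _) ?_
      rw [Multiset.map_map]
      refine lt_of_le_of_lt (Multiset.sum_le_card_nsmul _ 1 ?_) ?_
      · intro x hx
        simp only [Multiset.mem_map, Function.comp] at hx
        obtain ⟨a, _, rfl⟩ := hx
        exact (natDegree_add_C).trans_le natDegree_X_le
      · simp; omega
  constructor
  · intro h d hd
    rw [key]; exact h d (by omega)
  · intro h i hi
    rw [← key]; exact h i (by omega)

/-- the character of the integral group ring attached to `x` -/
noncomputable def auxChi (p n : ℕ) [NeZero p] (x : Fin n → ZMod p) :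
    AddMonoidAlgebra ℤ (Fin n → ZMod p) →ₐ[ℤ] ℂ :=
  AddMonoidAlgebra.lift ℤ ℂ (Fin n → ZMod p)
    { toFun := fun v => ZMod.stdAddChar (x ⬝ᵥ v.toAdd)
      map_one' := by simp
      map_mul' := by intro a b; simp [dotProduct_add, AddChar.map_add_eq_mul] }

theorem auxChi_single (p n : ℕ) [NeZero p] (x v : Fin n → ZMod p) (r : ℤ) :
    auxChi p n x (AddMonoidAlgebra.single v r) = r * ZMod.stdAddChar (x ⬝ᵥ v) := by
  simp [auxChi, AddMonoidAlgebra.lift_single]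

theorem aux_orth_s19 (p n : ℕ) [NeZero p] (v : Fin n → ZMod p) :
    ∑ x : Fin n → ZMod p, (ZMod.stdAddChar (x ⬝ᵥ v) : ℂ) =
      if v = 0 then ((Fintype.card (Fin n → ZMod p) : ℕ) : ℂ) else 0 := by
  classical
  let ψ : AddChar (Fin n → ZMod p) ℂ :=
    { toFun := fun x => ZMod.stdAddChar (x ⬝ᵥ v)
      map_zero_eq_one' := by simp
      map_add_eq_mul' := by intro a b; simp [add_dotProduct, AddChar.map_add_eq_mul] }
  have h := AddChar.sum_eq_ite ψ
  have h0 : ψ = 0 ↔ v = 0 := by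
    constructor
    · intro h
      ext i
      have h1 : ψ (Pi.single i 1) = 1 := by rw [h]; rfl
      have h2 : (ZMod.stdAddChar (v i) : ℂ) = 1 := by
        simpa [ψ] using h1
      rw [← (ZMod.stdAddChar (N := p)).map_zero_eq_one, ZMod.injective_stdAddChar.eq_iff] at h2
      simpa using h2
    · rintro rfl
      ext x
      simp [ψ]
  simp only [h0] at h
  exact h

theorem aux_inv_s19 (p n : ℕ) [NeZero p] (f : AddMonoidAlgebra ℤ (Fin n → ZMod p))
    (v : Fin n → ZMod p) :
    ∑ x : Fin n → ZMod p, auxChi p n x f * ZMod.stdAddChar (x ⬝ᵥ (-v)) =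
      (Fintype.card (Fin n → ZMod p) : ℕ) * (f.coeff v : ℂ) := by
  induction f using AddMonoidAlgebra.induction_linear with
  | zero => simp
  | add f g hf hg =>
    simp only [map_add, add_mul, Finset.sum_add_distrib, hf, hg]
    simp [mul_add]
  | single w r =>
    simp only [auxChi_single, mul_assoc, ← AddChar.map_add_eq_mul, ← dotProduct_add]
    rw [← Finset.mul_sum, aux_orth_s19]
    by_cases h : w = v
    · subst h; simp [mul_comm]
    · rw [if_neg]
      · simp [h]
      · intro h'; apply h; rw [← sub_eq_add_neg] at h'; exact sub_eq_zero.mp h'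

theorem aux_int (p n : ℕ) [NeZero p] {ι : Type*} [Fintype ι] (v : ι → Fin n → ZMod p) :
    (∏ i, ((1 : AddMonoidAlgebra ℤ (Fin n → ZMod p)) - AddMonoidAlgebra.single (v i) 1)) ≠ 0 ↔
      ∃ x : Fin n → ZMod p, ∀ i, x ⬝ᵥ v i ≠ 0 := by
  have key : ∀ x, auxChi p n x
      (∏ i, ((1 : AddMonoidAlgebra ℤ (Fin n → ZMod p)) - AddMonoidAlgebra.single (v i) 1)) ≠ 0 ↔
      ∀ i, x ⬝ᵥ v i ≠ 0 := by
    intro x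
    rw [map_prod, Finset.prod_ne_zero_iff]
    simp only [Finset.mem_univ, true_imp_iff, map_sub, map_one, auxChi_single]
    refine forall_congr' fun i => not_congr ?_
    rw [Int.cast_one, one_mul, sub_eq_zero, ← (ZMod.stdAddChar (N := p)).map_zero_eq_one,
      ZMod.injective_stdAddChar.eq_iff, eq_comm]
  simp only [← key]
  constructor
  · intro h
    by_contra! hx
    apply h
    ext w
    have h1 := aux_inv_s19 p n (∏ i, (1 - AddMonoidAlgebra.single (v i) 1)) w
    simp only [hx, zero_mul, Finset.sum_const_zero] at h1
    have h2 := (mul_eq_zero.mp h1.symm).resolve_left (by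
      exact_mod_cast Fintype.card_ne_zero)
    simpa using h2
  · rintro ⟨x, hx⟩ h
    exact hx (by rw [h, map_zero])

theorem aux_dvd {p n : ℕ} [Fact p.Prime] (R : Type*) [CommRing R] (c : ZMod p) (hc : c ≠ 0)
    (v : Fin n → ZMod p) :
    ((1 : AddMonoidAlgebra R (Fin n → ZMod p)) - AddMonoidAlgebra.single (c • v) 1) ∣
     ((1 : AddMonoidAlgebra R (Fin n → ZMod p)) - AddMonoidAlgebra.single v 1) := by
  have h := one_sub_dvd_one_sub_pow
    (AddMonoidAlgebra.single (c • v) 1 : AddMonoidAlgebra R (Fin n → ZMod p)) (c⁻¹).val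
  rw [AddMonoidAlgebra.single_pow, one_pow] at h
  convert h using 3
  ext i
  simp [hc]

theorem aux_two0 {p n : ℕ} [Fact p.Prime] {ι : Type*} [Fintype ι] {Q : Type*} [CommRing Q]
    [Algebra (ZMod p) Q] (j : AddMonoidAlgebra (ZMod p) (Fin n → ZMod p) →+* Q) (u : Q)
    (hu : u ^ p = 1)
    (L : (Fin n → ZMod p) →+ ZMod p) (v : ι → Fin n → ZMod p) (hL : ∀ i, L (v i) = 1)
    (h : ∏ i, ((1 : AddMonoidAlgebra (ZMod p) (Fin n → ZMod p)) -
      AddMonoidAlgebra.single (v i) 1) = 0) :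
      ∏ i, ((u - 1) + j ((1 : AddMonoidAlgebra (ZMod p) (Fin n → ZMod p)) -
      AddMonoidAlgebra.single (v i) 1)) = 0 := by
  obtain ⟨ψ, hψ⟩ : ∃ ψ : AddChar (ZMod p) Q, ψ 1 = u := by
    refine ⟨AddChar.zmodChar p hu, ?_⟩
    have := AddChar.zmodChar_apply' hu 1
    simpa using this
  let F : Multiplicative (Fin n → ZMod p) →* Q :=
    { toFun := fun w => j (AddMonoidAlgebra.single w.toAdd 1) * ψ (-(L w.toAdd))
      map_one' := by
        simp [← AddMonoidAlgebra.one_def]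
      map_mul' := by
        intro a b
        have : (AddMonoidAlgebra.single (a.toAdd + b.toAdd) 1 :
            AddMonoidAlgebra (ZMod p) (Fin n → ZMod p)) =
          AddMonoidAlgebra.single a.toAdd 1 * AddMonoidAlgebra.single b.toAdd 1 := by
          rw [AddMonoidAlgebra.single_mul_single, one_mul]
        simp only [toAdd_mul, this, map_add, neg_add, AddChar.map_add_eq_mul, map_mul]
        ring }
  let Φ := AddMonoidAlgebra.lift (ZMod p) Q (Fin n → ZMod p) F
  have hΦ : ∀ i, (u - 1) + j (1 - AddMonoidAlgebra.single (v i) 1) =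
      u * Φ (1 - AddMonoidAlgebra.single (v i) 1) := by
    intro i
    have e1 : Φ (AddMonoidAlgebra.single (v i) 1) =
      j (AddMonoidAlgebra.single (v i) 1) * ψ (-1) := by
      simp only [Φ, AddMonoidAlgebra.lift_single]
      simp [hL, F]
    have e2 : u * ψ (-1) = 1 := by
      rw [← hψ, ← AddChar.map_add_eq_mul]
      simp
    rw [map_sub, map_one, map_sub, map_one, e1, mul_sub, mul_left_comm, e2]
    ring
  rw [Finset.prod_congr rfl (fun i _ => hΦ i), Finset.prod_mul_distrib, ← map_prod Φ, h,
    map_zero, mul_zero]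

open Polynomial in
/-- from vanishing with all vectors on an affine hyperplane to divisibility by `X ^ p` -/
theorem aux_two {p n : ℕ} [Fact p.Prime] {ι : Type*} [Fintype ι]
    (L : (Fin n → ZMod p) →+ ZMod p) (v : ι → Fin n → ZMod p) (hL : ∀ i, L (v i) = 1)
    (h : ∏ i, ((1 : AddMonoidAlgebra (ZMod p) (Fin n → ZMod p)) -
      AddMonoidAlgebra.single (v i) 1) = 0) :
    (X : (AddMonoidAlgebra (ZMod p) (Fin n → ZMod p))[X]) ^ p ∣
      ∏ i, (X + C ((1 : AddMonoidAlgebra (ZMod p) (Fin n → ZMod p)) -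
      AddMonoidAlgebra.single (v i) 1)) := by
  let I : Ideal (AddMonoidAlgebra (ZMod p) (Fin n → ZMod p))[X] := Ideal.span {X ^ p}
  let q := Ideal.Quotient.mk I
  rw [← Ideal.mem_span_singleton, ← Ideal.Quotient.eq_zero_iff_mem]
  change q _ = 0
  have hX : q (1 + X) ^ p = 1 := by
    have : CharP (AddMonoidAlgebra (ZMod p) (Fin n → ZMod p))[X] p := by
      have : CharP (AddMonoidAlgebra (ZMod p) (Fin n → ZMod p)) p :=
        charP_of_injective_algebraMap (algebraMap (ZMod p) _).injective p
      infer_instance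
    rw [← map_pow, add_pow_char, one_pow, map_add, map_one, add_eq_left]
    exact Ideal.Quotient.eq_zero_iff_mem.mpr (Ideal.mem_span_singleton_self _)
  have := aux_two0 (q.comp C) (q (1 + X)) hX L v hL h
  rw [map_prod, ← this]
  refine Finset.prod_congr rfl fun i _ => ?_
  rw [map_add q 1 X, map_one, add_sub_cancel_left, map_add, RingHom.comp_apply]

open Polynomial in
theorem aux_one {p n : ℕ} [Fact p.Prime] {ι : Type*} [Fintype ι]
    (v : ι → Fin n → ZMod p)
    (h : (X : (AddMonoidAlgebra (ZMod p) (Fin n → ZMod p))[X]) ^ p ∣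
      ∏ i, (X + C ((1 : AddMonoidAlgebra (ZMod p) (Fin n → ZMod p)) -
      AddMonoidAlgebra.single (v i) 1))) :
    ∏ i, ((1 : AddMonoidAlgebra (ZMod p) (Fin (n+1) → ZMod p)) -
      AddMonoidAlgebra.single (Fin.cons (1 - ∑ j, v i j) (v i) : Fin (n+1) → ZMod p) 1) = 0 := by
  let A := AddMonoidAlgebra (ZMod p) (Fin n → ZMod p)
  let B := AddMonoidAlgebra (ZMod p) (Fin (n+1) → ZMod p)
  let φ : (Fin n → ZMod p) →+ (Fin (n+1) → ZMod p) :=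
    { toFun := fun w => Fin.cons (- ∑ j, w j) w
      map_zero' := by ext i; refine Fin.cases ?_ (fun j => ?_) i <;> simp
      map_add' := by
        intro a b; ext i
        refine Fin.cases ?_ (fun j => ?_) i <;> simp [Finset.sum_add_distrib, add_comm] }
  let h₀ : B := AddMonoidAlgebra.single (Pi.single 0 (-1)) 1
  have hp0 : h₀ ^ p = 1 := by
    simp only [h₀]
    rw [AddMonoidAlgebra.single_pow, one_pow, AddMonoidAlgebra.one_def]
    congr 1
    ext i
    simp
  let k₀ : B := AddMonoidAlgebra.single (Pi.single 0 1) 1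
  have hk : k₀ * h₀ = 1 := by
    simp only [h₀, k₀]
    rw [AddMonoidAlgebra.single_mul_single, ← Pi.single_add, AddMonoidAlgebra.one_def]
    simp
  let Ψ : A[X] →+* B := eval₂RingHom (AddMonoidAlgebra.mapDomainRingHom (ZMod p) φ) (h₀ - 1)
  have hXp : Ψ (X ^ p) = 0 := by
    have : CharP B p := charP_of_injective_algebraMap (algebraMap (ZMod p) B).injective p
    simp only [Ψ, map_pow, coe_eval₂RingHom, eval₂_X]
    rw [sub_pow_char, hp0, one_pow, sub_self]
  have hi : ∀ i, ((1 : B) -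
      AddMonoidAlgebra.single (Fin.cons (1 - ∑ j, v i j) (v i) : Fin (n+1) → ZMod p) 1) =
      k₀ * Ψ (X + C ((1 : A) - AddMonoidAlgebra.single (v i) 1)) := by
    intro i
    have : Ψ (X + C ((1 : A) - AddMonoidAlgebra.single (v i) 1)) =
        h₀ - AddMonoidAlgebra.single (φ (v i)) 1 := by
      simp only [Ψ, coe_eval₂RingHom, eval₂_add, eval₂_X, eval₂_C]
      rw [map_sub, map_one]
      have : (AddMonoidAlgebra.mapDomainRingHom (ZMod p) φ) (AddMonoidAlgebra.single (v i) 1) =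
          AddMonoidAlgebra.single (φ (v i)) 1 := AddMonoidAlgebra.mapDomain_single
      rw [this]
      ring
    rw [this, mul_sub, hk]
    simp only [k₀]
    rw [AddMonoidAlgebra.single_mul_single, one_mul]
    congr 2
    ext j
    refine Fin.cases ?_ (fun j => ?_) j <;> simp [φ, sub_eq_add_neg]
  have h0 : Ψ (∏ i, (X + C ((1 : A) - AddMonoidAlgebra.single (v i) 1))) = 0 := by
    obtain ⟨c, hc⟩ := h
    rw [hc, map_mul, hXp, zero_mul]
  rw [Finset.prod_congr rfl (fun i _ => hi i), Finset.prod_mul_distrib, ← map_prod, h0, mul_zero]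

/-- the list of the `2n` vectors -/
def auxV {p n : ℕ} (M : Matrix (Fin n) (Fin n) (ZMod p)) : Fin n ⊕ Fin n → Fin n → ZMod p
  | Sum.inl j => Pi.single j 1
  | Sum.inr j => M j

theorem auxV_inl {p n : ℕ} (M : Matrix (Fin n) (Fin n) (ZMod p)) (j : Fin n) :
    auxV M (Sum.inl j) = Pi.single j 1 := rfl

theorem auxV_inr {p n : ℕ} (M : Matrix (Fin n) (Fin n) (ZMod p)) (j : Fin n) :
    auxV M (Sum.inr j) = M j := rfl

open Polynomial in
theorem aux_cond {p n : ℕ} [Fact p.Prime] (M : Matrix (Fin n) (Fin n) (ZMod p)) :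
    (∀ i : ℕ, i ≤ p - 1 →
        (if i ≤ 2 * n then
          (((Finset.univ : Finset (Fin n)).val.map
              (fun j => (1 : AddMonoidAlgebra (ZMod p) (Fin n → ZMod p)) -
                AddMonoidAlgebra.single (Pi.single j 1) 1)) +
            ((Finset.univ : Finset (Fin n)).val.map
              (fun j => (1 : AddMonoidAlgebra (ZMod p) (Fin n → ZMod p)) -
                AddMonoidAlgebra.single (M j) 1))).esymm (2 * n - i)
        else 0) = 0) ↔
    (X : (AddMonoidAlgebra (ZMod p) (Fin n → ZMod p))[X]) ^ p ∣
      ∏ i : Fin n ⊕ Fin n, (X + C ((1 : AddMonoidAlgebra (ZMod p) (Fin n → ZMod p)) -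
      AddMonoidAlgebra.single (auxV M i) 1)) := by
  rw [aux_esymm _ (2 * n) p (by simp; ring) (Fact.out (p := p.Prime)).pos, Fintype.prod_sum_type,
    Multiset.map_add, Multiset.prod_add, Multiset.map_map, Multiset.map_map]
  rfl

theorem aux_prod {R : Type*} [CommRing R] {p n : ℕ} (M : Matrix (Fin n) (Fin n) (ZMod p)) :
    (∏ i : Fin n, ((1 : AddMonoidAlgebra R (Fin n → ZMod p)) -
          AddMonoidAlgebra.single (Pi.single i 1) 1)) *
        (∏ i : Fin n, ((1 : AddMonoidAlgebra R (Fin n → ZMod p)) -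
          AddMonoidAlgebra.single (M i) 1)) =
    ∏ i : Fin n ⊕ Fin n, ((1 : AddMonoidAlgebra R (Fin n → ZMod p)) -
      AddMonoidAlgebra.single (auxV M i) 1) := by
  rw [Fintype.prod_sum_type]
  rfl

/-- **Proposition (symmetric-function reformulation of Conjecture 2).** Let `p > 3` be
prime. The statement that for every `n ≥ 1` and every nonsingular matrix `M` the vanishing
of `∏ (1 - g^{e i}) * ∏ (1 - g^{a i})` in `F_p[F_p^n]` implies its vanishing in
`ℤ[F_p^n]` is equivalent to the statement that there is no `n ≥ 1` and nonsingular matrix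
`M` such that `σ_{2n-i}` of the `2n` elements `(1 - g^{e j}), (1 - g^{a j})` vanishes in
`F_p[F_p^n]` for every `0 ≤ i ≤ p - 1` (where `σ_j = 0` for `j < 0`). -/
theorem stmt_19 (p : ℕ) (hp : p.Prime) (hp3 : 3 < p) :
    (∀ n : ℕ, 1 ≤ n → ∀ M : Matrix (Fin n) (Fin n) (ZMod p), IsUnit M.det →
      ((∏ i : Fin n, ((1 : AddMonoidAlgebra (ZMod p) (Fin n → ZMod p)) -
          AddMonoidAlgebra.single (Pi.single i 1) 1)) *
        (∏ i : Fin n, ((1 : AddMonoidAlgebra (ZMod p) (Fin n → ZMod p)) -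
          AddMonoidAlgebra.single (M i) 1)) = 0) →
      ((∏ i : Fin n, ((1 : AddMonoidAlgebra ℤ (Fin n → ZMod p)) -
          AddMonoidAlgebra.single (Pi.single i 1) 1)) *
        (∏ i : Fin n, ((1 : AddMonoidAlgebra ℤ (Fin n → ZMod p)) -
          AddMonoidAlgebra.single (M i) 1)) = 0)) ↔
    (¬ ∃ n : ℕ, 1 ≤ n ∧ ∃ M : Matrix (Fin n) (Fin n) (ZMod p), IsUnit M.det ∧
      ∀ i : ℕ, i ≤ p - 1 →
        (if i ≤ 2 * n then
          (((Finset.univ : Finset (Fin n)).val.map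
              (fun j => (1 : AddMonoidAlgebra (ZMod p) (Fin n → ZMod p)) -
                AddMonoidAlgebra.single (Pi.single j 1) 1)) +
            ((Finset.univ : Finset (Fin n)).val.map
              (fun j => (1 : AddMonoidAlgebra (ZMod p) (Fin n → ZMod p)) -
                AddMonoidAlgebra.single (M j) 1))).esymm (2 * n - i)
        else 0) = 0) := by
  have : Fact p.Prime := ⟨hp⟩
  simp only [aux_cond, aux_prod]
  constructor
  · rintro ha ⟨n, hn, M, hM, h⟩
    have h1 := aux_one _ h
    let M' : Matrix (Fin (n+1)) (Fin (n+1)) (ZMod p) :=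
      Fin.cons (Pi.single 0 1) (fun i => Fin.cons (1 - ∑ j, M i j) (M i))
    have hdet : M'.det = M.det := by
      rw [Matrix.det_succ_row_zero, Fin.sum_univ_succ]
      simp [M']
      rfl
    have h2 := ha (n+1) (by omega) M' (by rwa [hdet])
    refine (aux_int p (n+1) (auxV M')).mpr
      ⟨fun _ => 1, ?_⟩ (h2 ?_)
    · rintro (i | i)
      · simp [auxV_inl]
      · rw [auxV_inr]
        refine Fin.cases ?_ (fun i => ?_) i
        · simp [M', dotProduct]
        · simp [M', dotProduct, Fin.sum_univ_succ]
    · rw [Fintype.prod_sum_type] at h1 ⊢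
      rw [Fin.prod_univ_succ, Fin.prod_univ_succ]
      have e : ∀ i : Fin n, (Fin.cons (1 - ∑ j, (Pi.single i 1 : Fin n → ZMod p) j)
          (Pi.single i 1 : Fin n → ZMod p) : Fin (n+1) → ZMod p) = Pi.single i.succ 1 := by
        intro i
        ext k
        refine Fin.cases ?_ (fun k => ?_) k
        · simp [Pi.single_apply]
        · simp [Pi.single_apply]
      simp only [auxV_inl, auxV_inr, e] at h1 ⊢
      have e2 : ∀ i : Fin n, M' i.succ = Fin.cons (1 - ∑ j, M i j) (M i) := fun i => rfl
      simp only [e2]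
      rw [mul_mul_mul_comm, h1, mul_zero]
  · intro hb n hn M hM h0
    by_contra hne
    obtain ⟨x, hx⟩ := (aux_int p n _).mp hne
    apply hb
    have hx1 : ∀ i, x i ≠ 0 := by
      intro i
      simpa [auxV_inl] using hx (Sum.inl i)
    have hx2 : ∀ i, x ⬝ᵥ M i ≠ 0 := fun i => hx (Sum.inr i)
    let M' : Matrix (Fin n) (Fin n) (ZMod p) := 
      Matrix.diagonal (fun i => (x ⬝ᵥ M i)⁻¹) * M * Matrix.diagonal x
    have hM' : ∀ i j, M' i j = (x ⬝ᵥ M i)⁻¹ * M i j * x j := by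
      intro i j
      simp [M', Matrix.mul_diagonal, Matrix.diagonal_mul]
    refine ⟨n, hn, M', ?_, ?_⟩
    · simp only [M', Matrix.det_mul, Matrix.det_diagonal, isUnit_iff_ne_zero] at hM ⊢
      refine mul_ne_zero (mul_ne_zero ?_ hM) ?_
      · exact Finset.prod_ne_zero_iff.mpr fun i _ => inv_ne_zero (hx2 i)
      · exact Finset.prod_ne_zero_iff.mpr fun i _ => hx1 i
    · let L : (Fin n → ZMod p) →+ ZMod p :=
        { toFun := fun v => ∑ j, v j
          map_zero' := by simp
          map_add' := by intro a b; simp [Finset.sum_add_distrib] }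
      refine aux_two L _ ?_ ?_
      · rintro (i | i)
        · simp [L, auxV_inl]
        · simp only [L, auxV_inr, AddMonoidHom.coe_mk, ZeroHom.coe_mk, hM', mul_assoc]
          rw [← Finset.mul_sum]
          have : ∑ j, M i j * x j = x ⬝ᵥ M i := by simp [dotProduct, mul_comm]
          rw [this, inv_mul_cancel₀ (hx2 i)]
      · let φ : (Fin n → ZMod p) →+ (Fin n → ZMod p) :=
          { toFun := fun v j => v j * x j
            map_zero' := by ext; simp
            map_add' := by intro a b; ext; simp [add_mul] }
        have h1 := congrArg (AddMonoidAlgebra.mapDomainRingHom (ZMod p) φ) h0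
        rw [map_zero, map_prod] at h1
        apply zero_dvd_iff.mp
        rw [← h1]
        refine Finset.prod_dvd_prod_of_dvd _ _ ?_
        intro i _
        have e : ∀ w, (AddMonoidAlgebra.mapDomainRingHom (ZMod p) φ)
            (AddMonoidAlgebra.single w 1) =
          AddMonoidAlgebra.single (φ w) 1 := fun w => AddMonoidAlgebra.mapDomain_single
        rw [map_sub, map_one, e]
        rcases i with i | i
        · have e3 : φ (auxV M (Sum.inl i)) = x i • (Pi.single i 1 : Fin n → ZMod p) := by
            ext k
            by_cases hk : k = i
            · subst hk; simp [φ, auxV_inl]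
            · simp [φ, hk, auxV_inl]
          rw [e3, auxV_inl]
          exact aux_dvd (ZMod p) (x i) (hx1 i) (Pi.single i 1)
        · have e3 : φ (auxV M (Sum.inr i)) = (x ⬝ᵥ M i) • M' i := by
            ext k
            have h3 := hx2 i
            simp only [φ, auxV_inr, AddMonoidHom.coe_mk, ZeroHom.coe_mk, Pi.smul_apply, hM',
              smul_eq_mul]
            field_simp
          rw [e3, auxV_inr]
          exact aux_dvd (ZMod p) (x ⬝ᵥ M i) (hx2 i) (M' i)
end
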